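/- arXiv:1609.00284 — 8 statements merged into one kernel-verified Lean document; each statement's English description precedes it below -/
import Mathlib

section
/- Let G and G' be finite simple graphs, each with exactly n vertices, and let k satisfy 2 ≤ k ≤ n. If G and G' have the same k-deck, then G and G' have the same (k-1)-deck. -/
open SimpleGraph

/-- `SameDeck G G' k`: `G` and `G'` have the same `k`-deck, i.e. for every simple graph `H`
on `k` vertices, the number of `k`-element vertex subsets of `G` inducing a subgraph
isomorphic to `H` equals the corresponding number for `G'`. -/
def SameDeck {V W : Type*} [Fintype V] [Fintype W]
    (G : SimpleGraph V) (G' : SimpleGraph W) (k : ℕ) : Prop :=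
  ∀ H : SimpleGraph (Fin k),
    Set.ncard {s : Finset V | s.card = k ∧ Nonempty ((G.induce (↑s : Set V)) ≃g H)} =
    Set.ncard {s : Finset W | s.card = k ∧ Nonempty ((G'.induce (↑s : Set W)) ≃g H)}

/-- `copies G H = s(G,H)`, the number of vertex subsets of `G` whose induced subgraph is
isomorphic to `H`. -/
noncomputable def copies {V W : Type*} [Fintype V]
    (G : SimpleGraph V) (H : SimpleGraph W) : ℕ :=
  Set.ncard {s : Finset V | Nonempty ((G.induce (↑s : Set V)) ≃g H)}

/-- The connected component `c` of `G` is a path on `m` vertices. -/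
def CompIsPath {V : Type*} (G : SimpleGraph V) (c : G.ConnectedComponent) (m : ℕ) : Prop :=
  Nonempty ((G.induce c.supp) ≃g pathGraph m)

/-- The connected component `c` of `G` is a cycle on `m` vertices (`m ≥ 3`). -/
def CompIsCycle {V : Type*} (G : SimpleGraph V) (c : G.ConnectedComponent) (m : ℕ) : Prop :=
  3 ≤ m ∧ Nonempty ((G.induce c.supp) ≃g cycleGraph m)

/-- A linear forest: every connected component is a path. -/
def IsLinearForest {V : Type*} (G : SimpleGraph V) : Prop :=
  ∀ c : G.ConnectedComponent, ∃ m : ℕ, CompIsPath G c m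

section aux
open Finset Classical

theorem aux_super {V : Type*} [Fintype V] (t : Finset V) (m : ℕ) (ht : t.card = m) :
    (((univ : Finset V).powersetCard (m+1)).filter (fun s => t ⊆ s)).card
      = Fintype.card V - m := by
  have : ((univ : Finset V).powersetCard (m+1)).filter (fun s => t ⊆ s)
      = tᶜ.image (fun a => insert a t) := by
    ext s
    simp only [mem_filter, mem_powersetCard, subset_univ, true_and, mem_image, mem_compl]
    constructor
    · rintro ⟨h1, h2⟩
      have h3 : (s \ t).card = 1 := by
        rw [card_sdiff_of_subset h2]; omega
      obtain ⟨a, ha⟩ := card_eq_one.1 h3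
      have ha' : a ∈ s \ t := by rw [ha]; simp
      refine ⟨a, (mem_sdiff.1 ha').2, ?_⟩
      rw [← sdiff_union_of_subset h2, ha]
      rfl
    · rintro ⟨a, ha, rfl⟩
      exact ⟨by rw [card_insert_of_notMem ha, ht], subset_insert _ _⟩
  rw [this, card_image_of_injOn, card_compl, ht]
  intro a ha b hb hab
  simp only [coe_compl, Set.mem_compl_iff, mem_coe] at ha hb
  have : a ∈ insert b t := by
    have h1 : a ∈ insert a t := mem_insert_self _ _
    simpa only [hab] using (show a ∈ (fun a => insert a t) b from hab ▸ h1)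
  rcases mem_insert.1 this with h | h
  · exact h
  · exact absurd h ha

/-- Number of `m`-subsets inducing `H`. -/
noncomputable def cnt {V : Type*} [Fintype V] (G : SimpleGraph V) (m : ℕ)
    (H : SimpleGraph (Fin m)) : ℕ :=
  (((univ : Finset V).powersetCard m).filter
    (fun s : Finset V => Nonempty ((G.induce (↑s : Set V)) ≃g H))).card

theorem cnt_eq {V : Type*} [Fintype V] (G : SimpleGraph V) (m : ℕ)
    (H : SimpleGraph (Fin m)) :
    Set.ncard {s : Finset V | s.card = m ∧ Nonempty ((G.induce (↑s : Set V)) ≃g H)}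
      = cnt G m H := by
  rw [cnt, ← Set.ncard_coe_finset]
  congr 1
  ext s
  simp

theorem aux_double {V : Type*} [Fintype V] (G : SimpleGraph V) (m : ℕ)
    (H : SimpleGraph (Fin m)) :
    ∑ s ∈ (univ : Finset V).powersetCard (m+1),
      ((s.powersetCard m).filter (fun t : Finset V => Nonempty ((G.induce (↑t : Set V)) ≃g H))).card
      = cnt G m H * (Fintype.card V - m) := by
  rw [cnt, ← smul_eq_mul, ← sum_const]
  have := sum_card_bipartiteAbove_eq_sum_card_bipartiteBelow
    (s := (univ : Finset V).powersetCard (m+1))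
    (t := ((univ : Finset V).powersetCard m).filter
      (fun s : Finset V => Nonempty ((G.induce (↑s : Set V)) ≃g H))) (fun s t => t ⊆ s)
  refine Eq.trans (sum_congr rfl fun s _ => ?_) (this.trans (sum_congr rfl fun t ht => ?_))
  · congr 1
    ext t
    simp only [bipartiteAbove, mem_filter, mem_powersetCard, subset_univ, true_and]
    tauto
  · exact aux_super t m (by simpa using (mem_filter.1 ht).1)

/-- Induced graph on the image of an embedding. -/
theorem aux_iso {V U : Type*} (G : SimpleGraph V) (K : SimpleGraph U)
    (f : K ↪g G) (t : Finset U) :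
    Nonempty (K.induce (↑t : Set U) ≃g G.induce (↑(t.map f.toEmbedding) : Set V)) := by
  refine ⟨⟨(Equiv.Set.image f (↑t : Set U) f.injective).trans
    (Equiv.setCongr (by simp)), ?_⟩⟩
  rintro ⟨a, ha⟩ ⟨b, hb⟩
  exact f.map_rel_iff

theorem aux_inv {V : Type*} [Fintype V] (G : SimpleGraph V) (m k : ℕ)
    (H : SimpleGraph (Fin m)) (K : SimpleGraph (Fin k)) (s : Finset V)
    (φ : G.induce (↑s : Set V) ≃g K) :
    ((s.powersetCard m).filter (fun t : Finset V => Nonempty ((G.induce (↑t : Set V)) ≃g H))).card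
      = cnt K m H := by
  let f : K ↪g G := φ.symm.toEmbedding.trans (Embedding.induce (↑s : Set V))
  have hs : s = univ.map f.toEmbedding := by
    ext v
    simp only [mem_map, mem_univ, true_and]
    constructor
    · intro hv
      refine ⟨φ ⟨v, hv⟩, ?_⟩
      simp [f]
    · rintro ⟨a, rfl⟩
      exact (φ.symm a).2
  rw [cnt]
  symm
  refine card_bij (fun t _ => t.map f.toEmbedding) ?_ ?_ ?_
  · intro t ht
    simp only [mem_filter, mem_powersetCard, subset_univ, true_and] at ht ⊢
    obtain ⟨e⟩ := aux_iso G K f t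
    obtain ⟨h1, ⟨g⟩⟩ := ht
    refine ⟨⟨?_, by simpa using h1⟩, ⟨e.symm.trans g⟩⟩
    rw [hs]
    exact map_subset_map.2 (subset_univ _)
  · intro a _ b _ hab
    exact map_injective _ hab
  · intro t ht
    simp only [mem_filter, mem_powersetCard, subset_univ, true_and] at ht
    obtain ⟨⟨h0, h1⟩, ⟨g⟩⟩ := ht
    rw [hs, subset_map_iff] at h0
    obtain ⟨u, -, rfl⟩ := h0
    obtain ⟨e⟩ := aux_iso G K f u
    exact ⟨u, by simpa using ⟨by simpa using h1, ⟨e.trans g⟩⟩, rfl⟩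

theorem aux_exists {V : Type*} (G : SimpleGraph V) (k : ℕ) (s : Finset V) (hs : s.card = k) :
    ∃ K : SimpleGraph (Fin k), Nonempty (G.induce (↑s : Set V) ≃g K) := by
  have e : (↑s : Set V) ≃ Fin k := s.equivFinOfCardEq hs
  exact ⟨(G.induce (↑s : Set V)).map e.toEmbedding, ⟨Iso.map e _⟩⟩

theorem aux_sum {V : Type*} [Fintype V] (G : SimpleGraph V) (m k : ℕ)
    (H : SimpleGraph (Fin m)) :
    ((∑ s ∈ (univ : Finset V).powersetCard k,
      ((s.powersetCard m).filter
        (fun t : Finset V => Nonempty ((G.induce (↑t : Set V)) ≃g H))).card : ℕ) : ℚ)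
      = ∑ K : SimpleGraph (Fin k), (cnt G k K : ℚ) *
        ((cnt K m H : ℚ) / ((univ.filter (fun L : SimpleGraph (Fin k) =>
          Nonempty (K ≃g L))).card : ℚ)) := by
  simp only [cnt.eq_1 G k, card_filter (fun s : Finset V => Nonempty (G.induce (↑s : Set V) ≃g _)),
    Nat.cast_sum, sum_mul]
  rw [sum_comm]
  refine sum_congr rfl fun s hs => ?_
  obtain ⟨K₀, ⟨φ⟩⟩ := aux_exists G k s (by simpa using hs)
  have key : ∀ K : SimpleGraph (Fin k),
      (((if Nonempty (G.induce (↑s : Set V) ≃g K) then 1 else 0 : ℕ) : ℚ)) *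
        ((cnt K m H : ℚ) / ((univ.filter (fun L : SimpleGraph (Fin k) =>
          Nonempty (K ≃g L))).card : ℚ))
      = if Nonempty (K₀ ≃g K) then
        ((cnt K₀ m H : ℚ) / ((univ.filter (fun L : SimpleGraph (Fin k) =>
          Nonempty (K₀ ≃g L))).card : ℚ)) else 0 := by
    intro K
    by_cases hK : Nonempty (K₀ ≃g K)
    · obtain ⟨e⟩ := hK
      have h1 : Nonempty (G.induce (↑s : Set V) ≃g K) := ⟨φ.trans e⟩
      have h2 : (univ.filter (fun L : SimpleGraph (Fin k) => Nonempty (K ≃g L)))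
          = univ.filter (fun L : SimpleGraph (Fin k) => Nonempty (K₀ ≃g L)) := by
        ext L
        simp only [mem_filter, mem_univ, true_and]
        exact ⟨fun ⟨g⟩ => ⟨e.trans g⟩, fun ⟨g⟩ => ⟨e.symm.trans g⟩⟩
      rw [if_pos h1, if_pos ⟨e⟩, h2, ← aux_inv G m k H K s (φ.trans e),
        ← aux_inv G m k H K₀ s φ]
      simp
    · have h1 : ¬ Nonempty (G.induce (↑s : Set V) ≃g K) :=
        fun ⟨g⟩ => hK ⟨φ.symm.trans g⟩
      rw [if_neg h1, if_neg hK]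
      simp
  rw [sum_congr rfl fun K _ => key K, ← sum_filter, sum_const, nsmul_eq_mul,
    ← Nat.cast_sum, ← card_filter, aux_inv G m k H K₀ s φ, mul_div_cancel₀]
  have : 0 < (univ.filter (fun L : SimpleGraph (Fin k) => Nonempty (K₀ ≃g L))).card :=
    card_pos.2 ⟨K₀, by simpa using ⟨Iso.refl⟩⟩
  positivity

end aux

/-- If two graphs with exactly `n` vertices have the same `k`-deck
(with `2 ≤ k ≤ n`), then they have the same `(k-1)`-deck. -/
theorem stmt_0 {V W : Type*} [Fintype V] [Fintype W]
    (G : SimpleGraph V) (G' : SimpleGraph W) (n k : ℕ)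
    (hV : Fintype.card V = n) (hW : Fintype.card W = n)
    (hk : 2 ≤ k) (hkn : k ≤ n)
    (h : SameDeck G G' k) :
    SameDeck G G' (k - 1) := by
  obtain ⟨m, rfl⟩ : ∃ m, k = m + 1 := ⟨k - 1, by omega⟩
  intro H
  change SimpleGraph (Fin m) at H
  simp only [Nat.add_sub_cancel]
  rw [cnt_eq, cnt_eq]
  have h' : ∀ K, cnt G (m+1) K = cnt G' (m+1) K := fun K => by
    rw [← cnt_eq, ← cnt_eq]; exact h K
  have e1 := aux_sum G m (m+1) H
  have e2 := aux_sum G' m (m+1) H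
  simp only [h'] at e1
  rw [← e2, aux_double, aux_double, hV, hW] at e1
  have e3 := Nat.cast_injective (R := ℚ) e1
  exact Nat.eq_of_mul_eq_mul_right (by omega) e3
end

section
/- Let G and G' be finite simple graphs with maximum degree at most 2 having the same number of vertices and the same number of edges, and let k ∈ ℕ. If every connected component of each of G and G' is either a cycle with more than k vertices or a path with at least k-1 vertices, then G and G' have the same k-deck. -/
open SimpleGraph

def Sol {I V : Type*} (E F : I → I → Prop) (adj : V → V → Prop) : Set (I → V) :=
  {x | (∀ i j, E i j → x i = x j) ∧ ∀ i j, F i j → adj (x i) (x j)}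

def nadj (a b : ℕ) : Prop := a + 1 = b ∨ b + 1 = a

def Conn {I : Type*} (E F : I → I → Prop) : Prop :=
  ∀ p : I → Prop, (∀ i j, E i j ∨ F i j → (p i ↔ p j)) → ∀ i j, p i → p j

def Nrm {I : Type*} (E F : I → I → Prop) : Set (I → ℕ) :=
  {y | y ∈ Sol E F nadj ∧ ∃ i, y i = 0}

noncomputable def hi {I : Type*} [Fintype I] (y : I → ℕ) : ℕ := Finset.univ.sup y

theorem le_hi {I : Type*} [Fintype I] (y : I → ℕ) (i : I) : y i ≤ hi y :=
  Finset.le_sup (f := y) (Finset.mem_univ i)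

theorem hi_att {I : Type*} [Fintype I] [Nonempty I] (y : I → ℕ) : ∃ i, y i = hi y := by
  obtain ⟨i, _, h⟩ := Finset.exists_mem_eq_sup Finset.univ Finset.univ_nonempty y
  exact ⟨i, h.symm⟩

theorem hi_lt {I : Type*} [Fintype I] {E F : I → I → Prop} (hc : Conn E F)
    {y : I → ℕ} (hy : y ∈ Nrm E F) : hi y < Fintype.card I := by
  obtain ⟨⟨hE, hF⟩, i0, h0⟩ := hy
  have : Nonempty I := ⟨i0⟩
  have hsub : Finset.range (hi y + 1) ⊆ Finset.univ.image y := by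
    intro t ht
    by_contra hn
    have hn' : ∀ i, y i ≠ t := by
      intro i h; exact hn (Finset.mem_image.2 ⟨i, Finset.mem_univ _, h⟩)
    obtain ⟨i1, h1⟩ := hi_att y
    have := hc (fun i => y i < t) (by
      intro i j h
      have a := hn' i
      have b := hn' j
      rcases h with h | h
      · have := hE i j h; simp only [this]
      · have := hF i j h; unfold nadj at this; constructor <;> intro _ <;> omega) i0 i1
      (by have := hn' i0; show y i0 < t; omega)
    simp only [Finset.mem_range] at ht this
    omega
  have := Finset.card_le_card hsub
  have h2 : (Finset.univ.image y).card ≤ Fintype.card I := Finset.card_image_le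
  simp at this
  omega

theorem nrm_finite {I : Type*} [Fintype I] {E F : I → I → Prop} (hc : Conn E F) :
    (Nrm E F).Finite := by
  classical
  apply Set.Finite.subset (s := (Fintype.piFinset fun _ : I => Finset.range (Fintype.card I) : Finset (I → ℕ)))
    (Finset.finite_toSet _)
  intro y hy
  simp only [Finset.mem_coe, Fintype.mem_piFinset, Finset.mem_range]
  intro i
  exact (le_hi y i).trans_lt (hi_lt hc hy)

theorem exists_min {I : Type*} [Finite I] [Nonempty I] (z : I → ℕ) : ∃ i, ∀ j, z i ≤ z j :=
  Finite.exists_min z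

theorem path_card {I : Type*} [Fintype I] [Nonempty I] {E F : I → I → Prop} (m : ℕ) :
    Nat.card (Sol E F (pathGraph m).Adj) = Nat.card (Σ y : Nrm E F, Fin (m - hi y.1)) := by
  symm
  refine Nat.card_eq_of_bijective (fun p => ⟨fun i => ⟨p.2.1 + p.1.1 i, ?_⟩, ?_⟩) ⟨?_, ?_⟩
  · have := le_hi p.1.1 i; have := p.2.2; omega
  · have hE := p.1.2.1.1
    have hF := p.1.2.1.2
    refine ⟨fun i j h => ?_, fun i j h => ?_⟩
    · exact Fin.ext (congrArg (fun t => p.2.1 + t) (hE i j h))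
    · rw [pathGraph_adj]; have := hF i j h; unfold nadj at this
      show p.2.1 + p.1.1 i + 1 = p.2.1 + p.1.1 j ∨ p.2.1 + p.1.1 j + 1 = p.2.1 + p.1.1 i
      omega
  · rintro ⟨⟨y, ⟨hE, hF⟩, i0, h0⟩, a⟩ ⟨⟨y', ⟨hE', hF'⟩, i1, h1⟩, a'⟩ h
    have h' : ∀ i, a.1 + y i = a'.1 + y' i := by
      intro i
      have := congrFun (congrArg Subtype.val h) i
      simpa using this
    have e : a.1 = a'.1 := by have := h' i0; have := h' i1; omega
    have ey : y = y' := by funext i; have := h' i; omega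
    subst ey
    have : a = a' := Fin.ext e
    subst this
    rfl
  · rintro ⟨x, hE, hF⟩
    obtain ⟨i0, h0⟩ := exists_min (fun i => (x i).1)
    have hyN : (fun i => (x i).1 - (x i0).1) ∈ Nrm E F := by
      refine ⟨⟨fun i j h => by simp [hE i j h], fun i j h => ?_⟩, i0, by simp⟩
      have := hF i j h
      rw [pathGraph_adj] at this
      have := h0 i; have := h0 j
      show nadj ((x i).1 - (x i0).1) ((x j).1 - (x i0).1); unfold nadj; omega
    refine ⟨⟨⟨_, hyN⟩, ⟨(x i0).1, ?_⟩⟩, ?_⟩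
    · simp only
      obtain ⟨i1, h1⟩ := hi_att (fun i => (x i).1 - (x i0).1)
      rw [← h1]
      have := (x i1).2; have := h0 i1; omega
    · apply Subtype.ext; funext i; apply Fin.ext
      have := h0 i
      simp only; omega

theorem path_card' {I : Type*} [Fintype I] [Nonempty I] {E F : I → I → Prop} (hc : Conn E F)
    (m : ℕ) (hm : Fintype.card I ≤ m + 1) :
    (Nat.card (Sol E F (pathGraph m).Adj) : ℤ) =
      m * (Nat.card (Nrm E F)) - ∑ᶠ y : Nrm E F, (hi y.1 : ℤ) := by
  have := (nrm_finite hc).fintype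
  rw [path_card, Nat.card_sigma, finsum_eq_sum_of_fintype]
  have : ∀ y : Nrm E F, ((Nat.card (Fin (m - hi y.1)) : ℕ) : ℤ) = m - hi y.1 := by
    intro y
    have := hi_lt hc y.2
    simp; omega
  push_cast [this]
  rw [Finset.sum_sub_distrib]
  simp [mul_comm]

theorem cyc_adj (n : ℕ) (u v : Fin (n+3)) : (cycleGraph (n+3)).Adj u v ↔
    (u.1 + 1 = v.1 ∨ v.1 + 1 = u.1 ∨ (u.1 = 0 ∧ v.1 = n + 2) ∨ (v.1 = 0 ∧ u.1 = n + 2)) := by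
  rw [cycleGraph_adj]
  have hu := u.2
  have hv := v.2
  simp only [Fin.ext_iff, Fin.sub_def]
  have one : ((1 : Fin (n + 1 + 2)) : ℕ) = 1 := rfl
  rw [one]
  have e : ∀ a b : ℕ, a < n + 3 → b < n + 3 →
     ((n + 1 + 1 + 1 - b + a) % (n+1+1+1) = if b ≤ a then a - b else n + 3 - b + a) := by
    intro a b ha hb
    split_ifs with h
    · rw [show n + 1 + 1 + 1 - b + a = (a - b) + (n+1+1+1) by omega, Nat.add_mod_right, Nat.mod_eq_of_lt (by omega)]
    · rw [Nat.mod_eq_of_lt (by omega)]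
  have e1 := e u.1 v.1 hu hv
  have e2 := e v.1 u.1 hv hu
  simp only [Nat.add_assoc, Nat.reduceAdd] at *
  rw [e1, e2]
  split_ifs <;> omega

theorem cyc_card {I : Type*} [Fintype I] [Nonempty I] {E F : I → I → Prop} (hc : Conn E F)
    (m : ℕ) (h3 : 3 ≤ m) (hm : Fintype.card I < m) :
    Nat.card (Sol E F (cycleGraph m).Adj) = m * Nat.card (Nrm E F) := by
  obtain ⟨n, rfl⟩ : ∃ n, m = n + 3 := ⟨m - 3, by omega⟩
  have hp : Nat.card (Fin (n+3) × Nrm E F) = (n+3) * Nat.card (Nrm E F) := by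
    simp [Nat.card_prod]
  rw [← hp]
  symm
  refine Nat.card_eq_of_bijective (fun p => ⟨fun i => ⟨(p.1.1 + p.2.1 i) % (n+3), Nat.mod_lt _ (by omega)⟩, ?_⟩) ⟨?_, ?_⟩
  · obtain ⟨a, y, ⟨hE, hF⟩, h0⟩ := p
    refine ⟨fun i j h => ?_, fun i j h => ?_⟩
    · simp [hE i j h]
    · rw [cyc_adj]; have := hF i j h; unfold nadj at this; simp only
      have key : ∀ b : ℕ, ((b % (n+3)) + 1 = (b+1) % (n+3)) ∨ ((b+1) % (n+3) = 0 ∧ b % (n+3) = n+2) := by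
        intro b
        have h1 := Nat.mod_lt b (show n + 3 > 0 by omega)
        rw [Nat.add_mod, Nat.mod_eq_of_lt (show 1 < n + 3 by omega)]
        by_cases hb : b % (n+3) = n + 2
        · right; rw [hb]; simp
        · left; rw [Nat.mod_eq_of_lt (show b % (n+3) + 1 < n + 3 by omega)]
      rcases this with h | h
      · rw [← h, ← add_assoc]
        have := key (a.1 + y i); tauto
      · rw [← h, ← add_assoc]
        have := key (a.1 + y j); tauto
  · rintro ⟨a, y, ⟨hE, hF⟩, i0, h0⟩ ⟨a', y', ⟨hE', hF'⟩, i1, h1⟩ h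
    have h' : ∀ i, ((n + 3 : ℕ) : ℤ) ∣ ((a.1 + y i : ℕ) : ℤ) - ((a'.1 + y' i : ℕ) : ℤ) := by
      intro i
      have := congrFun (congrArg Subtype.val h) i
      have h2 : (a.1 + y i) % (n+3) = (a'.1 + y' i) % (n+3) := by simpa using this
      exact Nat.modEq_iff_dvd.1 (show (a'.1 + y' i) ≡ (a.1 + y i) [MOD (n+3)] from h2.symm)
    choose q hq using h'
    have hqc : ∀ i j, q i = q j := by
      intro i j
      have hs : ∀ i j, E i j ∨ F i j → q i = q j := by
        intro i j hij
        have hi := hq i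
        have hj := hq j
        have hb : |((n + 3 : ℕ) : ℤ) * (q i - q j)| ≤ 2 := by
          rw [mul_sub, ← hi, ← hj, abs_le]
          rcases hij with hij | hij
          · rw [hE i j hij, hE' i j hij]; simp
          · have := hF i j hij; have := hF' i j hij; unfold nadj at *
            push_cast; omega
        by_contra hne
        have h1 : 1 ≤ |q i - q j| := Int.one_le_abs (sub_ne_zero.2 hne)
        rw [abs_mul] at hb
        have h2 : |((n + 3 : ℕ) : ℤ)| = n + 3 := by rw [abs_of_nonneg] <;> push_cast <;> omega
        rw [h2] at hb
        nlinarith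
      exact (hc (fun l => q i = q l) (by
        intro s t hst; simp only [hs s t hst]) i j rfl)
    have e0 := hq i0
    have e1 := hq i1
    rw [hqc i1 i0] at e1
    have ha := a.2
    have ha' := a'.2
    push_cast at e0 e1
    have e : (n + 3 : ℤ) * q i0 = a.1 - a'.1 := by omega
    have q0 : q i0 = 0 := by
      by_contra hne
      rcases lt_or_gt_of_ne hne with h | h
      · have : (n + 3 : ℤ) * q i0 ≤ (n+3) * (-1) := by
          apply mul_le_mul_of_nonneg_left <;> omega
        omega
      · have : (n + 3 : ℤ) * 1 ≤ (n+3) * q i0 := by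
          apply mul_le_mul_of_nonneg_left <;> omega
        omega
    have ea : a = a' := by
      apply Fin.ext; rw [q0] at e; omega
    subst ea
    have ey : y = y' := by
      funext i; have := hq i; rw [hqc i i0, q0] at this; push_cast at this; omega
    subst ey
    rfl
  · rintro ⟨x, hE, hF⟩
    obtain ⟨t, ht⟩ : ∃ t, ∀ i, x i ≠ t := by
      by_contra hcon
      push Not at hcon
      have := Fintype.card_le_of_surjective x hcon
      simp at this; omega
    have ht' : ∀ i, (x i).1 ≠ t.1 := fun i h => ht i (Fin.ext h)
    obtain ⟨z, hz⟩ : ∃ z : I → ℕ, ∀ i, (t.1 ≤ (x i).1 ∧ z i + t.1 = (x i).1) ∨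
        ((x i).1 < t.1 ∧ z i + t.1 = (x i).1 + (n + 3)) := by
      refine ⟨fun i => if t.1 ≤ (x i).1 then (x i).1 - t.1 else (x i).1 + (n+3) - t.1, ?_⟩
      intro i
      have := t.2
      simp only; split_ifs <;> omega
    obtain ⟨i0, h0⟩ := exists_min z
    have hyN : (fun i => z i - z i0) ∈ Nrm E F := by
      refine ⟨⟨fun i j h => ?_, fun i j h => ?_⟩, i0, by simp⟩
      · have a := hz i; have b := hz j; rw [hE i j h] at a; simp only; omega
      · have := hF i j h
        rw [cyc_adj] at this
        have := h0 i; have := h0 j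
        have := hz i; have := hz j; have := ht' i; have := ht' j
        have := t.2; have := (x i).2; have := (x j).2
        show nadj (z i - z i0) (z j - z i0)
        unfold nadj; omega
    refine ⟨⟨⟨(t.1 + z i0) % (n+3), Nat.mod_lt _ (by omega)⟩, ⟨_, hyN⟩⟩, ?_⟩
    apply Subtype.ext; funext i; apply Fin.ext
    have := h0 i
    simp only [Nat.mod_add_mod]
    rw [show t.1 + z i0 + (z i - z i0) = z i + t.1 by omega]
    rcases hz i with ⟨_, h⟩ | ⟨_, h⟩
    · rw [h, Nat.mod_eq_of_lt (x i).2]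
    · rw [h, Nat.add_mod_right, Nat.mod_eq_of_lt (x i).2]

theorem sol_iso {I V W : Type*} {E F : I → I → Prop} {G : SimpleGraph V} {H : SimpleGraph W}
    (e : G ≃g H) : Nat.card (Sol E F G.Adj) = Nat.card (Sol E F H.Adj) := by
  refine Nat.card_congr ((Equiv.arrowCongr (Equiv.refl I) e.toEquiv).subtypeEquiv ?_)
  intro x
  have ha : ∀ u v, H.Adj (e u) (e v) ↔ G.Adj u v := fun u v => e.map_adj_iff
  simp [Sol, ha]

theorem comp_sum {I V : Type*} [Finite I] [Nonempty I] [Fintype V] {E F : I → I → Prop}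
    (hc : Conn E F) (G : SimpleGraph V) [Fintype G.ConnectedComponent] :
    Nat.card (Sol E F G.Adj) = ∑ c : G.ConnectedComponent,
      Nat.card (Sol E F (G.induce c.supp).Adj) := by
  classical
  rw [← Nat.card_sigma]
  symm
  refine Nat.card_eq_of_bijective (fun p => ⟨fun i => (p.2.1 i).1, ?_⟩) ⟨?_, ?_⟩
  · have h1 := p.2.2.1
    have h2 := p.2.2.2
    exact ⟨fun i j h => congrArg Subtype.val (h1 i j h), fun i j h => h2 i j h⟩
  · rintro ⟨c, x, hx⟩ ⟨c', x', hx'⟩ h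
    have h' : ∀ i, (x i).1 = (x' i).1 := fun i => congrFun (congrArg Subtype.val h) i
    obtain ⟨i0⟩ := ‹Nonempty I›
    have e : c = c' := by
      have a := (x i0).2
      have b := (x' i0).2
      rw [← h' i0] at b
      rw [ConnectedComponent.mem_supp_iff] at a b
      rw [← a, ← b]
    subst e
    have : x = x' := by funext i; exact Subtype.ext (h' i)
    subst this
    rfl
  · rintro ⟨x, hE, hF⟩
    obtain ⟨i0⟩ := ‹Nonempty I›
    have hall : ∀ i, G.connectedComponentMk (x i) = G.connectedComponentMk (x i0) := by
      intro i
      refine hc (fun l => G.connectedComponentMk (x l) = G.connectedComponentMk (x i0)) ?_ i0 i rfl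
      intro a b hab
      have : G.connectedComponentMk (x a) = G.connectedComponentMk (x b) := by
        rcases hab with h | h
        · rw [hE a b h]
        · exact ConnectedComponent.sound (hF a b h).reachable
      simp only [this]
    refine ⟨⟨G.connectedComponentMk (x i0), fun i => ⟨x i, hall i⟩, ?_⟩, rfl⟩
    exact ⟨fun i j h => Subtype.ext (hE i j h), fun i j h => hF i j h⟩

noncomputable def pcount {V : Type*} (G : SimpleGraph V) (k : ℕ) : ℕ :=
  Nat.card {c : G.ConnectedComponent // ¬ ∃ m, k < m ∧ CompIsCycle G c m}

noncomputable def wt {I : Type*} [Fintype I] (E F : I → I → Prop) : ℤ :=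
  ∑ᶠ y : Nrm E F, (hi y.1 : ℤ)

theorem conn_count {I V : Type*} [Fintype I] [Nonempty I] [Fintype V] {E F : I → I → Prop}
    (hc : Conn E F) (G : SimpleGraph V) (k : ℕ) (hI : Fintype.card I ≤ k)
    (hG : ∀ c : G.ConnectedComponent,
      (∃ m, k < m ∧ CompIsCycle G c m) ∨ (∃ m, k - 1 ≤ m ∧ CompIsPath G c m)) :
    (Nat.card (Sol E F G.Adj) : ℤ) =
      Fintype.card V * Nat.card (Nrm E F) - pcount G k * wt E F := by
  classical
  have : Fintype G.ConnectedComponent := Fintype.ofFinite _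
  have hI0 : 0 < Fintype.card I := Fintype.card_pos
  have key : ∀ c : G.ConnectedComponent, (Nat.card (Sol E F (G.induce c.supp).Adj) : ℤ) =
      Nat.card c.supp * Nat.card (Nrm E F) -
        (if ¬ ∃ m, k < m ∧ CompIsCycle G c m then 1 else 0) * wt E F := by
    intro c
    by_cases h : ¬ ∃ m, k < m ∧ CompIsCycle G c m
    · rw [if_pos h]
      obtain ⟨m, hm, ⟨e⟩⟩ := (hG c).resolve_left h
      rw [sol_iso e, Nat.card_congr e.toEquiv, path_card' hc m (by omega), wt]
      simp
    · rw [if_neg h]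
      obtain ⟨m, hm, h3, ⟨e⟩⟩ := not_not.1 h
      rw [sol_iso e, Nat.card_congr e.toEquiv, cyc_card hc m h3 (by omega)]
      simp
  rw [comp_sum hc G]
  push_cast
  rw [Finset.sum_congr rfl (fun c _ => key c), Finset.sum_sub_distrib, ← Finset.sum_mul,
    ← Finset.sum_mul]
  congr 2
  · have : Fintype.card V = ∑ c : G.ConnectedComponent, Nat.card c.supp := by
      rw [← Nat.card_sigma, ← Nat.card_eq_fintype_card]
      exact Nat.card_congr (Equiv.sigmaFiberEquiv G.connectedComponentMk).symm
    rw [this]; push_cast; rfl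
  · rw [pcount, Nat.card_eq_fintype_card, Fintype.card_subtype, Finset.sum_boole]

def edgeF (i j : Fin 2) : Prop := i = 0 ∧ j = 1
def noE {I : Type*} (_ _ : I) : Prop := False

theorem edge_conn : Conn noE edgeF := by
  intro p h i j
  have h2 : p 0 ↔ p 1 := h 0 1 (Or.inr ⟨rfl, rfl⟩)
  fin_cases i <;> fin_cases j <;> simp [h2]

theorem edge_sol {V : Type*} [Fintype V] (G : SimpleGraph V) :
    Nat.card (Sol noE edgeF G.Adj) = 2 * G.edgeSet.ncard := by
  classical
  have h := G.dart_card_eq_twice_card_edges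
  rw [← coe_edgeFinset, Set.ncard_coe_finset, ← h, ← Nat.card_eq_fintype_card]
  symm
  refine Nat.card_eq_of_bijective (fun d => ⟨![d.fst, d.snd], ?_⟩) ⟨?_, ?_⟩
  · refine ⟨fun i j h => h.elim, ?_⟩
    rintro i j ⟨rfl, rfl⟩
    exact d.adj
  · intro d d' h
    have h' := congrArg Subtype.val h
    have h0 := congrFun h' 0
    have h1 := congrFun h' 1
    apply Dart.ext
    exact Prod.ext h0 h1
  · rintro ⟨x, hE, hF⟩
    refine ⟨⟨(x 0, x 1), hF 0 1 ⟨rfl, rfl⟩⟩, ?_⟩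
    apply Subtype.ext
    funext i
    fin_cases i <;> rfl

theorem edge_wt : wt noE edgeF ≠ 0 := by
  have := (nrm_finite edge_conn).fintype
  rw [wt, finsum_eq_sum_of_fintype]
  apply ne_of_gt
  have hy : ![0, 1] ∈ Nrm noE edgeF := by
    refine ⟨⟨fun i j h => h.elim, ?_⟩, 0, rfl⟩
    rintro i j ⟨rfl, rfl⟩
    left; rfl
  refine Finset.sum_pos' (fun i _ => by positivity) ⟨⟨_, hy⟩, Finset.mem_univ _, ?_⟩
  have := le_hi ![0, 1] 1
  simp at this
  simp only
  omega

theorem wt_small {I : Type*} [Fintype I] {E F : I → I → Prop} (hc : Conn E F)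
    (h : Fintype.card I ≤ 1) : wt E F = 0 := by
  apply finsum_eq_zero_of_forall_eq_zero
  intro y
  have := hi_lt hc y.2
  omega

/-- the combined hypotheses on a graph -/
def Good {V : Type*} (G : SimpleGraph V) (k : ℕ) : Prop :=
  ∀ c : G.ConnectedComponent,
      (∃ m, k < m ∧ CompIsCycle G c m) ∨ (∃ m, k - 1 ≤ m ∧ CompIsPath G c m)

theorem conn_eq {I V W : Type*} [Fintype I] [Nonempty I] [Fintype V] [Fintype W]
    {E F : I → I → Prop} (hc : Conn E F) (G : SimpleGraph V) (G' : SimpleGraph W) (k : ℕ)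
    (hI : Fintype.card I ≤ k) (hG : Good G k) (hG' : Good G' k)
    (hcard : Fintype.card V = Fintype.card W)
    (hedges : G.edgeSet.ncard = G'.edgeSet.ncard) :
    Nat.card (Sol E F G.Adj) = Nat.card (Sol E F G'.Adj) := by
  zify
  rw [conn_count hc G k hI hG, conn_count hc G' k hI hG', hcard]
  by_cases hk : 2 ≤ k
  · have e1 := conn_count edge_conn G k (by simpa using hk) hG
    have e2 := conn_count edge_conn G' k (by simpa using hk) hG'
    rw [edge_sol, hedges, ← edge_sol, e2, hcard] at e1
    have : (pcount G' k : ℤ) * wt noE edgeF = pcount G k * wt noE edgeF := by linarith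
    rw [mul_right_cancel₀ edge_wt this]
  · rw [wt_small hc (by omega)]; simp

theorem prod_sol {I V : Type*} [Fintype I] [Finite V] (E F : I → I → Prop)
    (adj : V → V → Prop) [Fintype (Quot fun i j => E i j ∨ F i j)] :
    Nat.card (Sol E F adj) = ∏ q : Quot (fun i j => E i j ∨ F i j),
      Nat.card (Sol (fun i j : {i // Quot.mk _ i = q} => E i.1 j.1) (fun i j => F i.1 j.1) adj) := by
  classical
  rw [← Nat.card_pi]
  refine Nat.card_eq_of_bijective (fun x q => ⟨fun i => x.1 i.1, ?_⟩) ⟨?_, ?_⟩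
  · have h1 := x.2.1
    have h2 := x.2.2
    exact ⟨fun i j h => h1 i j h, fun i j h => h2 i j h⟩
  · intro x x' h
    apply Subtype.ext
    funext i
    exact congrFun (congrArg Subtype.val (congrFun h (Quot.mk _ i))) ⟨i, rfl⟩
  · intro f
    have hf : ∀ (q) (i : I) (h : Quot.mk _ i = q), (f (Quot.mk _ i)).1 ⟨i, rfl⟩ = (f q).1 ⟨i, h⟩ := by
      rintro q i rfl; rfl
    refine ⟨⟨fun i => (f (Quot.mk _ i)).1 ⟨i, rfl⟩, ⟨fun i j h => ?_, fun i j h => ?_⟩⟩, ?_⟩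
    · have e : Quot.mk (fun i j => E i j ∨ F i j) i = Quot.mk _ j := Quot.sound (Or.inl h)
      simp only
      rw [hf _ i e]
      exact (f (Quot.mk _ j)).2.1 ⟨i, e⟩ ⟨j, rfl⟩ h
    · have e : Quot.mk (fun i j => E i j ∨ F i j) i = Quot.mk _ j := Quot.sound (Or.inr h)
      simp only
      rw [hf _ i e]
      exact (f (Quot.mk _ j)).2.2 ⟨i, e⟩ ⟨j, rfl⟩ h
    · funext q
      apply Subtype.ext
      funext i
      exact hf q i.1 i.2

theorem fib_conn {I : Type*} (E F : I → I → Prop) (q : Quot fun i j => E i j ∨ F i j) :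
    Conn (fun i j : {i // Quot.mk _ i = q} => E i.1 j.1) (fun i j => F i.1 j.1) := by
  intro p hp i j hi
  let P : I → Prop := fun a => ∃ h : Quot.mk _ a = q, p ⟨a, h⟩
  have hP : ∀ a b, (E a b ∨ F a b) → P a = P b := by
    intro a b h
    have e : Quot.mk (fun i j => E i j ∨ F i j) a = Quot.mk _ b := Quot.sound h
    apply propext
    constructor
    · rintro ⟨h1, h2⟩
      exact ⟨e ▸ h1, (hp ⟨a, h1⟩ ⟨b, e ▸ h1⟩ h).1 h2⟩
    · rintro ⟨h1, h2⟩
      exact ⟨e.trans h1, (hp ⟨a, e.trans h1⟩ ⟨b, h1⟩ h).2 h2⟩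
  have h1 : Quot.lift P hP (Quot.mk _ i.1) := ⟨i.2, hi⟩
  rw [i.2, ← j.2] at h1
  exact h1.2

theorem sol_eq {I V W : Type*} [Fintype I] [Fintype V] [Fintype W]
    (E F : I → I → Prop) (G : SimpleGraph V) (G' : SimpleGraph W) (k : ℕ)
    (hI : Fintype.card I ≤ k) (hG : Good G k) (hG' : Good G' k)
    (hcard : Fintype.card V = Fintype.card W)
    (hedges : G.edgeSet.ncard = G'.edgeSet.ncard) :
    Nat.card (Sol E F G.Adj) = Nat.card (Sol E F G'.Adj) := by
  classical
  have : Fintype (Quot fun i j => E i j ∨ F i j) := Fintype.ofFinite _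
  rw [prod_sol, prod_sol]
  refine Finset.prod_congr rfl fun q _ => ?_
  have : Nonempty {i // Quot.mk (fun i j => E i j ∨ F i j) i = q} := by
    obtain ⟨i, hi⟩ := Quot.exists_rep q
    exact ⟨⟨i, hi⟩⟩
  exact conn_eq (fib_conn E F q) G G' k ((Fintype.card_subtype_le _).trans hI) hG hG' hcard hedges

theorem split_count {A X : Type*} [Fintype A] [Fintype X] [DecidableEq X]
    (f : A → Finset X) (S : Finset X) :
      Nat.card {a // S ⊆ f a} = Nat.card {a // f a = S} +
        ∑ T ∈ Finset.univ.filter (fun T => S ⊂ T), Nat.card {a // f a = T} := by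
    classical
    simp only [Nat.card_eq_fintype_card, Fintype.card_subtype]
    rw [← Finset.sum_insert (s := Finset.univ.filter (fun T => S ⊂ T))
      (f := fun T => (Finset.univ.filter (fun a => f a = T)).card) (by simp)]
    rw [Finset.card_eq_sum_card_fiberwise (f := f)
      (t := insert S (Finset.univ.filter (fun T => S ⊂ T)))]
    · refine Finset.sum_congr rfl fun T hT => ?_
      congr 1
      ext a
      simp only [Finset.mem_filter, Finset.mem_univ, true_and, and_iff_right_iff_imp]
      rintro rfl
      simp only [Finset.mem_insert, Finset.mem_filter, Finset.mem_univ, true_and] at hT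
      rcases hT with hT | hT
      · exact hT.ge
      · exact hT.subset
    · intro a ha
      simp only [Finset.coe_filter, Finset.mem_univ, true_and, Set.mem_ofPred_eq] at ha
      simp only [Finset.coe_insert, Finset.coe_filter, Finset.mem_univ, true_and]
      rcases eq_or_ssubset_of_subset ha with h | h
      · left; exact h.symm
      · right; exact h

theorem moebius {A B X : Type*} [Fintype A] [Fintype B] [Fintype X] [DecidableEq X]
    (f : A → Finset X) (g : B → Finset X)
    (h : ∀ S, Nat.card {a // S ⊆ f a} = Nat.card {b // S ⊆ g b}) (S : Finset X) :
    Nat.card {a // f a = S} = Nat.card {b // g b = S} := by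
  classical
  induction' hn : Fintype.card X - S.card using Nat.strong_induction_on with n ih generalizing S
  have e := h S
  rw [split_count f S, split_count g S] at e
  have : ∑ T ∈ Finset.univ.filter (fun T => S ⊂ T), Nat.card {a // f a = T} =
      ∑ T ∈ Finset.univ.filter (fun T => S ⊂ T), Nat.card {a // g a = T} := by
    refine Finset.sum_congr rfl fun T hT => ?_
    simp only [Finset.mem_filter, Finset.mem_univ, true_and] at hT
    have h1 := Finset.card_lt_card hT
    have h2 := Finset.card_le_univ T
    exact ih (Fintype.card X - T.card) (by omega) T rfl
  omega

theorem emb_count {V : Type*} [Fintype V] (G : SimpleGraph V) (k : ℕ) (H : SimpleGraph (Fin k)) :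
    Set.ncard {s : Finset V | s.card = k ∧ Nonempty ((G.induce (↑s : Set V)) ≃g H)} *
      Nat.card (H ≃g H) = Nat.card (H ↪g G) := by
  classical
  rw [← Nat.card_coe_set_eq, ← Nat.card_prod]
  refine Nat.card_eq_of_bijective
    (fun p => RelEmbedding.trans (RelIso.toRelEmbedding (p.2.trans (Classical.choice p.1.2.2).symm)) (Embedding.induce _)) ⟨?_, ?_⟩
  · rintro ⟨⟨s, hs, hn⟩, e⟩ ⟨⟨s', hs', hn'⟩, e'⟩ h
    have h' : ∀ i, ((Classical.choice hn).symm (e i)).1 = ((Classical.choice hn').symm (e' i)).1 :=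
      fun i => DFunLike.congr_fun h i
    have ess : s = s' := by
      ext v
      constructor
      · intro hv
        obtain ⟨i, hi⟩ := (e.trans (Classical.choice hn).symm).surjective ⟨v, hv⟩
        have := h' i
        have hi' : ((Classical.choice hn).symm (e i)).1 = v := congrArg Subtype.val hi
        rw [← hi', this]
        exact ((Classical.choice hn').symm (e' i)).2
      · intro hv
        obtain ⟨i, hi⟩ := (e'.trans (Classical.choice hn').symm).surjective ⟨v, hv⟩
        have := h' i
        have hi' : ((Classical.choice hn').symm (e' i)).1 = v := congrArg Subtype.val hi
        rw [← hi', ← this]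
        exact ((Classical.choice hn).symm (e i)).2
    subst ess
    have : e = e' := by
      ext i
      have := (Classical.choice hn).symm.injective (Subtype.ext (h' i))
      rw [this]
    subst this
    rfl
  · intro φ
    let s : Finset V := Finset.univ.map φ.toEmbedding
    have hs : s.card = k := by simp [s]
    have hmem : ∀ i, φ i ∈ (↑s : Set V) := fun i => by simp [s]
    let ψ : H ≃g G.induce (↑s : Set V) :=
      { toEquiv := Equiv.ofBijective (fun i => ⟨φ i, hmem i⟩) (by
          constructor
          · intro i j h
            exact φ.injective (congrArg Subtype.val h)
          · rintro ⟨v, hv⟩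
            have hv' : v ∈ s := hv
            obtain ⟨i, _, hi⟩ := Finset.mem_map.1 hv'
            exact ⟨i, Subtype.ext hi⟩)
        map_rel_iff' := by
          intro a b
          exact φ.map_rel_iff' }
    have hn : Nonempty (G.induce (↑s : Set V) ≃g H) := ⟨ψ.symm⟩
    refine ⟨⟨⟨s, hs, hn⟩, ψ.trans (Classical.choice hn)⟩, ?_⟩
    ext i
    show ((Classical.choice hn).symm ((Classical.choice hn) (ψ i))).1 = φ i
    rw [RelIso.symm_apply_apply]
    rfl

open Classical in
noncomputable def pat {V : Type*} (G : SimpleGraph V) (k : ℕ) (x : Fin k → V) :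
    Finset ((Fin k × Fin k) ⊕ (Fin k × Fin k)) :=
  Finset.univ.filter fun t => Sum.elim (fun p => x p.1 = x p.2) (fun p => G.Adj (x p.1) (x p.2)) t

open Classical in
noncomputable def tgt (k : ℕ) (H : SimpleGraph (Fin k)) :
    Finset ((Fin k × Fin k) ⊕ (Fin k × Fin k)) :=
  Finset.univ.filter fun t => Sum.elim (fun p => p.1 = p.2) (fun p => H.Adj p.1 p.2) t

theorem emb_pat {V : Type*} (G : SimpleGraph V) (k : ℕ) (H : SimpleGraph (Fin k)) :
    Nat.card (H ↪g G) = Nat.card {x // pat G k x = tgt k H} := by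
  refine Nat.card_eq_of_bijective (fun φ => ⟨φ, ?_⟩) ⟨?_, ?_⟩
  · ext t
    rcases t with ⟨i, j⟩ | ⟨i, j⟩ <;> simp [pat, tgt]
  · intro φ φ' h
    exact DFunLike.coe_injective (congrArg Subtype.val h)
  · rintro ⟨x, hx⟩
    have h1 : ∀ i j, x i = x j ↔ i = j := by
      intro i j
      have := Finset.ext_iff.1 hx (Sum.inl (i, j))
      simpa [pat, tgt] using this
    have h2 : ∀ i j, G.Adj (x i) (x j) ↔ H.Adj i j := by
      intro i j
      have := Finset.ext_iff.1 hx (Sum.inr (i, j))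
      simpa [pat, tgt] using this
    exact ⟨⟨⟨x, fun i j h => (h1 i j).1 h⟩, fun {i j} => h2 i j⟩, rfl⟩

theorem sub_pat {V : Type*} (G : SimpleGraph V) (k : ℕ)
    (S : Finset ((Fin k × Fin k) ⊕ (Fin k × Fin k))) :
    Nat.card {x // S ⊆ pat G k x} =
      Nat.card (Sol (fun i j => Sum.inl (i, j) ∈ S) (fun i j => Sum.inr (i, j) ∈ S) G.Adj) := by
  refine Nat.card_congr (Equiv.subtypeEquivRight fun x => ?_)
  constructor
  · intro h
    exact ⟨fun i j hij => by simpa [pat] using h hij, fun i j hij => by simpa [pat] using h hij⟩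
  · rintro ⟨h1, h2⟩ t ht
    rcases t with ⟨i, j⟩ | ⟨i, j⟩
    · simpa [pat] using h1 i j ht
    · simpa [pat] using h2 i j ht

/-- Graphs with maximum degree at most 2, the same number of vertices and the
same number of edges, all of whose components are cycles with more than `k` vertices or
paths with at least `k-1` vertices, have the same `k`-deck. -/
theorem stmt_1 {V W : Type*} [Fintype V] [Fintype W]
    (G : SimpleGraph V) (G' : SimpleGraph W) (k : ℕ)
    (hdegG : ∀ v, (G.neighborSet v).ncard ≤ 2)
    (hdegG' : ∀ w, (G'.neighborSet w).ncard ≤ 2)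
    (hcard : Fintype.card V = Fintype.card W)
    (hedges : G.edgeSet.ncard = G'.edgeSet.ncard)
    (hG : ∀ c : G.ConnectedComponent,
      (∃ m, k < m ∧ CompIsCycle G c m) ∨ (∃ m, k - 1 ≤ m ∧ CompIsPath G c m))
    (hG' : ∀ c : G'.ConnectedComponent,
      (∃ m, k < m ∧ CompIsCycle G' c m) ∨ (∃ m, k - 1 ≤ m ∧ CompIsPath G' c m)) :
    SameDeck G G' k := by
  classical
  intro H
  have : Finite (H ≃g H) := DFunLike.finite _
  have : Nonempty (H ≃g H) := ⟨RelIso.refl _⟩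
  apply Nat.eq_of_mul_eq_mul_right (Nat.card_pos (α := H ≃g H))
  rw [emb_count, emb_count, emb_pat, emb_pat]
  apply moebius
  intro S
  rw [sub_pat, sub_pat]
  exact sol_eq _ _ G G' k (by simp) hG hG' hcard hedges
end

section
/- Let k, q, r be natural numbers with q ≥ k+1, r ≥ k+1, q ≥ 3, and r ≥ 3. Then the cycle C_{q+r} and the disjoint union C_q + C_r have the same k-deck. -/
open SimpleGraph

theorem cyc_adj_nat (n : ℕ) (hn : 3 ≤ n) (u v : Fin n) : (cycleGraph n).Adj u v ↔
    (u.val + 1 = v.val ∨ v.val + 1 = u.val ∨ (u.val = 0 ∧ v.val + 1 = n) ∨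
      (v.val = 0 ∧ u.val + 1 = n)) := by
  obtain ⟨m, rfl⟩ : ∃ m, n = m + 2 := ⟨n - 2, by omega⟩
  rw [cycleGraph_adj']
  have hu := u.isLt
  have hv := v.isLt
  rw [Fin.val_sub, Fin.val_sub]
  have key : ∀ a b : ℕ, a < m + 2 → b < m + 2 →
      ((m + 2 - b + a) % (m + 2) = 1 ↔ (b + 1 = a ∨ (a = 0 ∧ b + 1 = m + 2))) := by
    intro a b ha hb
    rcases lt_or_ge (m + 2 - b + a) (m + 2) with h | h
    · rw [Nat.mod_eq_of_lt h]; omega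
    · rw [Nat.mod_eq_sub_mod h, Nat.mod_eq_of_lt (by omega)]; omega
  rw [key _ _ hu hv, key _ _ hv hu]
  omega

def swf (q r j x : ℕ) : ℕ :=
  if j ≤ q ∧ j ≤ r then
    if x < j then x + q else if q ≤ x ∧ x < q + j then x - q else x
  else x

def swp (q r j : ℕ) : Equiv.Perm (Fin (q + r)) :=
  Function.Involutive.toPerm
    (fun x => ⟨swf q r j x, by have := x.isLt; unfold swf; split_ifs <;> omega⟩)
    (by
      intro x
      apply Fin.ext
      have := x.isLt
      simp only [swf]
      split_ifs <;> omega)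

theorem swp_val (q r j : ℕ) (x : Fin (q + r)) : (swp q r j x).val = swf q r j x.val := rfl

theorem swp_swp (q r j : ℕ) (x : Fin (q + r)) : swp q r j (swp q r j x) = x :=
  Function.Involutive.toPerm_involutive _ x

def Mis (q r : ℕ) (S : Finset (Fin (q + r))) (i : ℕ) : Prop :=
  i < q ∧ i < r ∧ ∀ x ∈ S, x.val ≠ i ∧ x.val ≠ q + i

theorem Mis_map (q r j : ℕ) (S : Finset (Fin (q + r))) (i : ℕ) :
    Mis q r (S.map (swp q r j).toEmbedding) i ↔ Mis q r S i := by
  unfold Mis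
  refine and_congr_right fun hi => and_congr_right fun hi' => ?_
  simp only [Finset.forall_mem_map, Equiv.coe_toEmbedding, swp_val]
  refine forall₂_congr fun x _ => ?_
  unfold swf
  split_ifs <;> omega

noncomputable def fst0 (q r : ℕ) (S : Finset (Fin (q + r))) : ℕ := sInf {i | Mis q r S i}

noncomputable def Tm (q r : ℕ) (S : Finset (Fin (q + r))) : Finset (Fin (q + r)) :=
  S.map (swp q r (fst0 q r S)).toEmbedding

theorem fst0_Tm (q r : ℕ) (S : Finset (Fin (q + r))) : fst0 q r (Tm q r S) = fst0 q r S := by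
  unfold Tm
  conv_lhs => unfold fst0
  simp only [Mis_map]
  rfl

theorem Tm_Tm (q r : ℕ) (S : Finset (Fin (q + r))) : Tm q r (Tm q r S) = S := by
  rw [Tm, fst0_Tm, Tm, Finset.map_map]
  convert Finset.map_refl
  ext x
  simp [swp_swp]

theorem Tm_card (q r : ℕ) (S : Finset (Fin (q + r))) : (Tm q r S).card = S.card := by
  simp [Tm]

theorem exists_Mis (k q r : ℕ) (hq : k + 1 ≤ q) (hr : k + 1 ≤ r) (S : Finset (Fin (q + r)))
    (hS : S.card = k) : ∃ i, Mis q r S i := by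
  by_contra h
  have hsub : Finset.range (k + 1) ⊆ S.image (fun x => if x.val < q then x.val else x.val - q) := by
    intro i hi
    rw [Finset.mem_range] at hi
    have hi2 : ¬ Mis q r S i := fun h' => h ⟨i, h'⟩
    unfold Mis at hi2
    have : ∃ x ∈ S, x.val = i ∨ x.val = q + i := by
      by_contra h3
      push Not at h3
      exact hi2 ⟨by omega, by omega, h3⟩
    obtain ⟨x, hx, hxi⟩ := this
    rw [Finset.mem_image]
    refine ⟨x, hx, ?_⟩
    split_ifs <;> omega
  have h1 := Finset.card_le_card hsub
  have h2 := h1.trans Finset.card_image_le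
  rw [Finset.card_range] at h2
  omega

theorem sum_adj_nat (q r : ℕ) (hq : 3 ≤ q) (hr : 3 ≤ r) (u v : Fin (q + r)) :
    (cycleGraph q ⊕g cycleGraph r).Adj (finSumFinEquiv.symm u) (finSumFinEquiv.symm v) ↔
    (u.val < q ∧ v.val < q ∧ (u.val + 1 = v.val ∨ v.val + 1 = u.val ∨ (u.val = 0 ∧ v.val + 1 = q) ∨
      (v.val = 0 ∧ u.val + 1 = q))) ∨
    (q ≤ u.val ∧ q ≤ v.val ∧ (u.val + 1 = v.val ∨ v.val + 1 = u.val ∨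
      (u.val = q ∧ v.val + 1 = q + r) ∨ (v.val = q ∧ u.val + 1 = q + r))) := by
  obtain ⟨u, rfl⟩ := finSumFinEquiv.surjective u
  obtain ⟨v, rfl⟩ := finSumFinEquiv.surjective v
  rw [Equiv.symm_apply_apply, Equiv.symm_apply_apply]
  rcases u with u | u <;> rcases v with v | v <;>
    have hu := u.isLt <;> have hv := v.isLt <;>
    simp [cyc_adj_nat _ hq, cyc_adj_nat _ hr] <;> omega

theorem key_adj (q r : ℕ) (hq : 3 ≤ q) (hr : 3 ≤ r) (j : ℕ) (hjq : j < q) (hjr : j < r)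
    (u v : Fin (q + r)) (hu : u.val ≠ j ∧ u.val ≠ q + j) (hv : v.val ≠ j ∧ v.val ≠ q + j) :
    (cycleGraph q ⊕g cycleGraph r).Adj (finSumFinEquiv.symm (swp q r j u))
      (finSumFinEquiv.symm (swp q r j v)) ↔ (cycleGraph (q + r)).Adj u v := by
  rw [sum_adj_nat q r hq hr, cyc_adj_nat _ (by omega), swp_val, swp_val]
  have := u.isLt
  have := v.isLt
  unfold swf
  have hj : j ≤ q ∧ j ≤ r := by omega
  simp only [if_pos hj]
  split_ifs <;> omega

noncomputable def Um (q r : ℕ) (S : Finset (Fin (q + r))) : Finset (Fin q ⊕ Fin r) :=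
  (Tm q r S).map finSumFinEquiv.symm.toEmbedding

theorem Um_iso (k q r : ℕ) (hq : k + 1 ≤ q) (hr : k + 1 ≤ r) (hq3 : 3 ≤ q) (hr3 : 3 ≤ r)
    (S : Finset (Fin (q + r))) (hS : S.card = k) :
    Nonempty (((cycleGraph (q + r)).induce (↑S : Set (Fin (q + r)))) ≃g
      ((cycleGraph q ⊕g cycleGraph r).induce (↑(Um q r S) : Set (Fin q ⊕ Fin r)))) := by
  have hM : Mis q r S (fst0 q r S) := Nat.sInf_mem (exists_Mis k q r hq hr S hS)
  obtain ⟨h1, h2, h3⟩ := hM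
  let e : Fin (q + r) ≃ Fin q ⊕ Fin r := (swp q r (fst0 q r S)).trans finSumFinEquiv.symm
  refine ⟨⟨e.subtypeEquiv ?_, ?_⟩⟩
  · intro a
    simp [Um, Tm, e]
  · rintro ⟨a, ha⟩ ⟨b, hb⟩
    exact key_adj q r hq3 hr3 _ h1 h2 a b (h3 a ha) (h3 b hb)

/-- If `q, r ≥ k+1` and `q, r ≥ 3`, then `C_{q+r}` and `C_q + C_r` have the
same `k`-deck. -/
theorem stmt_2 (k q r : ℕ) (hq : k + 1 ≤ q) (hr : k + 1 ≤ r) (hq3 : 3 ≤ q) (hr3 : 3 ≤ r) :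
    SameDeck (cycleGraph (q + r)) (cycleGraph q ⊕g cycleGraph r) k := by
  intro H
  refine Set.ncard_congr (fun S _ => Um q r S) ?_ ?_ ?_
  · rintro S ⟨hS, ⟨f⟩⟩
    obtain ⟨g⟩ := Um_iso k q r hq hr hq3 hr3 S hS
    exact ⟨by simp [Um, Tm_card, hS], ⟨g.symm.trans f⟩⟩
  · intro S S' _ _ h
    have h' : Tm q r S = Tm q r S' := Finset.map_injective _ h
    rw [← Tm_Tm q r S, h', Tm_Tm]
  · rintro S' ⟨hS', ⟨f⟩⟩
    have hU : Um q r (Tm q r (S'.map finSumFinEquiv.toEmbedding)) = S' := by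
      rw [Um, Tm_Tm, Finset.map_map]
      convert Finset.map_refl
      ext x
      simp
    have hc : (Tm q r (S'.map finSumFinEquiv.toEmbedding)).card = k := by
      rw [Tm_card, Finset.card_map, hS']
    obtain ⟨g⟩ := Um_iso k q r hq hr hq3 hr3 _ hc
    rw [hU] at g
    exact ⟨_, ⟨hc, ⟨g.trans f⟩⟩, hU⟩
end

section
/- Let k, q, r be natural numbers with q ≥ k and r ≥ k and k ≥ 1. Then the disjoint union P_{q-1} + P_r and the disjoint union P_q + P_{r-1} have the same k-deck. -/
open SimpleGraph

/-- Two disjoint infinite paths. -/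
def GInf : SimpleGraph (ℕ ⊕ ℕ) := hasse ℕ ⊕g hasse ℕ

/-- Column of a vertex. -/
def colI : ℕ ⊕ ℕ → ℕ
  | Sum.inl x => x + 1
  | Sum.inr y => y

/-- Tail swap after column `j`. -/
def swapT (j : ℕ) : ℕ ⊕ ℕ → ℕ ⊕ ℕ
  | Sum.inl x => if x + 1 ≤ j then Sum.inl x else Sum.inr (x + 1)
  | Sum.inr y => if y ≤ j then Sum.inr y else Sum.inl (y - 1)

/-- The finite region. -/
def regI (a b : ℕ) : ℕ ⊕ ℕ → Prop
  | Sum.inl x => x < a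
  | Sum.inr y => y < b + 1

lemma swapT_invol (j : ℕ) : Function.Involutive (swapT j) := by
  rintro (x | y)
  · by_cases h : x + 1 ≤ j <;> simp [swapT, h]
  · by_cases h : y ≤ j
    · simp [swapT, h]
    · have h1 : ¬ (y - 1 + 1 ≤ j) := by omega
      have h2 : y - 1 + 1 = y := by omega
      simp only [swapT, h, if_false, h1]
      rw [h2]

lemma colI_swapT (j : ℕ) (u : ℕ ⊕ ℕ) : colI (swapT j u) = colI u := by
  rcases u with x | y
  · by_cases h : x + 1 ≤ j <;> simp [swapT, colI, h]
  · by_cases h : y ≤ j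
    · simp [swapT, colI, h]
    · simp only [swapT, colI, h, if_false]; omega

lemma swapT_adj (j : ℕ) (u v : ℕ ⊕ ℕ) (hu : colI u ≠ j) (hv : colI v ≠ j) :
    GInf.Adj (swapT j u) (swapT j v) ↔ GInf.Adj u v := by
  rcases u with x | x <;> rcases v with y | y <;> simp only [swapT, colI] at * <;>
    split_ifs <;>
    simp only [GInf, SimpleGraph.sum_adj, hasse_adj, Order.covBy_iff_add_one_eq,
      Bool.false_eq_true, false_iff, iff_false] <;>
    omega

lemma swapT_reg (a b j : ℕ) (ha : j ≤ a + 1) (hb : j ≤ b + 1) (u : ℕ ⊕ ℕ) (hu : colI u ≠ j)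
    (h : regI a b u) : regI b a (swapT j u) := by
  rcases u with x | x <;> simp only [swapT, colI, regI] at * <;>
    split_ifs <;> simp only [] <;> omega

/-- The sets counted. -/
def deckI (a b k : ℕ) (H : SimpleGraph (Fin k)) : Set (Finset (ℕ ⊕ ℕ)) :=
  {s | (∀ u ∈ s, regI a b u) ∧ s.card = k ∧ Nonempty ((GInf.induce (↑s : Set (ℕ ⊕ ℕ))) ≃g H)}

lemma regI_finite (a b : ℕ) : {u | regI a b u}.Finite := by
  apply ((Finset.range a).disjSum (Finset.range (b + 1))).finite_toSet.subset
  rintro (x | x) h <;> simpa [regI] using h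

lemma deckI_finite (a b k : ℕ) (H : SimpleGraph (Fin k)) : (deckI a b k H).Finite := by
  apply ((regI_finite a b).toFinset.powerset).finite_toSet.subset
  intro s hs
  simp only [Finset.coe_powerset, Set.mem_preimage, Set.mem_powerset_iff]
  intro u hu
  simpa using hs.1 u hu

/-- Least empty column. -/
noncomputable def gapI (s : Finset (ℕ ⊕ ℕ)) : ℕ := sInf {j | j ∉ s.image colI}

lemma gapI_aux (s : Finset (ℕ ⊕ ℕ)) : ∃ j ≤ s.card, j ∉ s.image colI := by
  by_contra! h
  have h1 : Finset.range (s.card + 1) ⊆ s.image colI := by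
    intro j hj
    exact h j (by simpa [Nat.lt_succ_iff] using hj)
  have h2 := Finset.card_le_card h1
  have h3 : (s.image colI).card ≤ s.card := Finset.card_image_le
  rw [Finset.card_range] at h2
  omega

lemma gapI_le (s : Finset (ℕ ⊕ ℕ)) : gapI s ≤ s.card := by
  obtain ⟨j, hj, h⟩ := gapI_aux s
  exact (Nat.sInf_le (s := {j | j ∉ s.image colI}) h).trans hj

lemma gapI_spec (s : Finset (ℕ ⊕ ℕ)) (u) (hu : u ∈ s) : colI u ≠ gapI s := by
  obtain ⟨j, hj, h⟩ := gapI_aux s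
  have h1 : gapI s ∉ s.image colI := Nat.sInf_mem (s := {j | j ∉ s.image colI}) ⟨j, h⟩
  intro h2
  exact h1 (h2 ▸ Finset.mem_image_of_mem _ hu)

/-- Set-level swap. -/
noncomputable def swapS (s : Finset (ℕ ⊕ ℕ)) : Finset (ℕ ⊕ ℕ) := s.image (swapT (gapI s))

lemma gapI_swapS (s : Finset (ℕ ⊕ ℕ)) : gapI (swapS s) = gapI s := by
  have h : (swapS s).image colI = s.image colI := by
    rw [swapS, Finset.image_image]
    exact Finset.image_congr (fun u _ => colI_swapT _ u)
  simp only [gapI, h]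

lemma swapS_invol (s : Finset (ℕ ⊕ ℕ)) : swapS (swapS s) = s := by
  rw [swapS, gapI_swapS, swapS, Finset.image_image, (swapT_invol _).comp_self, Finset.image_id]

lemma induce_image_iso {V W : Type*} (G : SimpleGraph V) (G' : SimpleGraph W) (f : V → W)
    (s : Finset V) (t : Finset W) (ht : (t : Set W) = f '' s) (hf : Set.InjOn f s)
    (hadj : ∀ u ∈ s, ∀ v ∈ s, G'.Adj (f u) (f v) ↔ G.Adj u v) :
    Nonempty (G.induce (↑s : Set V) ≃g G'.induce (↑t : Set W)) := by
  rw [ht]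
  refine ⟨⟨hf.bijOn_image.equiv f, ?_⟩⟩
  rintro ⟨u, hu⟩ ⟨v, hv⟩
  exact hadj u hu v hv

lemma deckI_le (a b k : ℕ) (H : SimpleGraph (Fin k)) (ha : k ≤ a + 1) (hb : k ≤ b + 1) :
    (deckI a b k H).ncard ≤ (deckI b a k H).ncard := by
  apply Set.ncard_le_ncard_of_injOn swapS _ _ (deckI_finite b a k H)
  · rintro s ⟨h1, h2, ⟨e⟩⟩
    have hg := gapI_le s
    refine ⟨?_, ?_, ?_⟩
    · intro u hu
      obtain ⟨v, hv, rfl⟩ := Finset.mem_image.1 hu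
      exact swapT_reg a b _ (by omega) (by omega) v (gapI_spec s v hv) (h1 v hv)
    · rw [swapS, Finset.card_image_of_injective _ (swapT_invol _).injective, h2]
    · obtain ⟨f⟩ := induce_image_iso GInf GInf (swapT (gapI s)) s (swapS s)
        (by simp [swapS]) (swapT_invol _).injective.injOn
        (fun u hu v hv => swapT_adj _ u v (gapI_spec s u hu) (gapI_spec s v hv))
      exact ⟨f.symm.trans e⟩
  · intro s _ t _ h
    rw [← swapS_invol s, h, swapS_invol]

lemma count_embed {V W : Type*} (G : SimpleGraph V) (G' : SimpleGraph W) (e : G ↪g G') (k : ℕ)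
    (H : SimpleGraph (Fin k)) (P : W → Prop) (hP : ∀ w, P w ↔ w ∈ Set.range e) :
    Set.ncard {s : Finset V | s.card = k ∧ Nonempty ((G.induce (↑s : Set V)) ≃g H)} =
    Set.ncard {s : Finset W | (∀ u ∈ s, P u) ∧ s.card = k ∧
      Nonempty ((G'.induce (↑s : Set W)) ≃g H)} := by
  have key : ∀ s : Finset V, Nonempty (G.induce (↑s : Set V) ≃g
      G'.induce (↑(s.map e.toEmbedding) : Set W)) := fun s =>
    induce_image_iso G G' e s _ (by simp) e.injective.injOn (fun u _ v _ => e.map_adj_iff)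
  refine Set.ncard_congr (fun s _ => s.map e.toEmbedding) ?_ ?_ ?_
  · rintro s ⟨h1, ⟨g⟩⟩
    obtain ⟨f⟩ := key s
    refine ⟨?_, by simpa using h1, ⟨f.symm.trans g⟩⟩
    intro u hu
    obtain ⟨v, hv, rfl⟩ := Finset.mem_map.1 hu
    exact (hP _).2 ⟨v, rfl⟩
  · intro s t _ _ h
    exact Finset.map_injective _ h
  · rintro t ⟨h0, h1, ⟨g⟩⟩
    obtain ⟨s, rfl⟩ : ∃ s : Finset V, s.map e.toEmbedding = t := by
      classical
      have h2 : (t : Set W) ⊆ e '' Set.univ := by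
        intro u hu
        rw [Set.image_univ]
        exact (hP u).1 (h0 u hu)
      obtain ⟨s, -, hs⟩ := Finset.subset_set_image_iff.1 h2
      exact ⟨s, by rw [← hs, Finset.map_eq_image]; rfl⟩
    obtain ⟨f⟩ := key s
    exact ⟨s, ⟨by simpa using h1, ⟨f.trans g⟩⟩, rfl⟩

/-- Embedding of the first sum. -/
def emb1 (a b : ℕ) : (pathGraph a ⊕g pathGraph b) ↪g GInf where
  toFun := Sum.map Fin.val Fin.val
  inj' := Sum.map_injective.2 ⟨Fin.val_injective, Fin.val_injective⟩
  map_rel_iff' := by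
    rintro (u | u) (v | v) <;>
      simp [GInf, pathGraph_adj, Order.covBy_iff_add_one_eq]

/-- If `q, r ≥ k ≥ 1`, then `P_{q-1} + P_r` and `P_q + P_{r-1}` have the
same `k`-deck. -/
theorem stmt_4 (k q r : ℕ) (hq : k ≤ q) (hr : k ≤ r) (hk : 1 ≤ k) :
    SameDeck (pathGraph (q - 1) ⊕g pathGraph r) (pathGraph q ⊕g pathGraph (r - 1)) k := by
  obtain ⟨a, rfl⟩ : ∃ a, q = a + 1 := ⟨q - 1, by omega⟩
  obtain ⟨b, rfl⟩ : ∃ b, r = b + 1 := ⟨r - 1, by omega⟩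
  change SameDeck (pathGraph a ⊕g pathGraph (b + 1)) (pathGraph (a + 1) ⊕g pathGraph b) k
  intro H
  have hreg : ∀ a b : ℕ, ∀ w, regI a b w ↔ w ∈ Set.range (emb1 a (b + 1)) := by
    intro a b w
    constructor
    · rcases w with x | x
      · intro h
        exact ⟨Sum.inl ⟨x, h⟩, rfl⟩
      · intro h
        exact ⟨Sum.inr ⟨x, h⟩, rfl⟩
    · rintro ⟨x | x, rfl⟩
      · exact x.2
      · exact x.2
  have hreg2 : ∀ w, regI b a w ↔
      w ∈ Set.range ((emb1 b (a + 1)).comp (Iso.sumComm).toEmbedding) := by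
    intro w
    rw [hreg b a w]
    constructor
    · rintro ⟨x, rfl⟩
      exact ⟨x.swap, by simp [Iso.sumComm]⟩
    · rintro ⟨x, rfl⟩
      exact ⟨x.swap, rfl⟩
  rw [count_embed _ _ (emb1 a (b + 1)) k H (regI a b) (hreg a b),
    count_embed _ _ ((emb1 b (a + 1)).comp (Iso.sumComm).toEmbedding) k H (regI b a) hreg2]
  exact le_antisymm (deckI_le a b k H hq hr) (deckI_le b a k H hr hq)
end

section
/- For every natural number n ≥ 4 there exist finite simple graphs G and G', each with exactly n vertices and maximum degree at most 2, such that G is connected, G' is disconnected, and G and G' have the same ⌊n/2⌋-deck. Consequently, for n ≥ 4 the least k such that the k-deck of an n-vertex graph always determines whether the graph is connected is at least ⌊n/2⌋ + 1. -/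
open SimpleGraph

namespace Deck5

/-- disjoint union of a cycle on `m` vertices and a path -/
def cp (n m : ℕ) : SimpleGraph (Fin n) where
  Adj u v := u ≠ v ∧ (((u.val + 1 = v.val ∧ v.val ≠ m) ∨ (v.val + 1 = u.val ∧ u.val ≠ m)) ∨
    ((u.val = 0 ∧ v.val + 1 = m) ∨ (v.val = 0 ∧ u.val + 1 = m)))
  symm := ⟨by
    rintro u v ⟨h, h'⟩
    exact ⟨h.symm, by tauto⟩⟩
  loopless := ⟨fun u h => h.1 rfl⟩

def tau (n m p : ℕ) (v : Fin n) : Fin n :=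
  if h : v.val < p ∧ v.val + m < n then ⟨v.val + m, h.2⟩
  else if m ≤ v.val ∧ v.val < m + p then ⟨v.val - m, by omega⟩ else v

lemma tau_val (n m p : ℕ) (v : Fin n) : (tau n m p v).val =
    if v.val < p ∧ v.val + m < n then v.val + m
    else if m ≤ v.val ∧ v.val < m + p then v.val - m else v.val := by
  unfold tau
  split_ifs <;> rfl

lemma tau_inv (n m p b : ℕ) (h1 : m + b = n) (h2 : b + 2 ≤ m) (hp : p ≤ b) :
    Function.Involutive (tau n m p) := by
  intro v
  apply Fin.ext
  have := v.2
  rw [tau_val, tau_val]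
  split_ifs <;> omega

def good (n m b : ℕ) (s : Finset (Fin n)) (q : ℕ) : Prop :=
  q ≤ b ∧ ∀ v ∈ s, v.val ≠ q ∧ v.val ≠ q + m

open Classical in
noncomputable def fp (g : ℕ → Prop) : ℕ := if h : ∃ q, g q then Nat.find h else 0

lemma fp_le (n m b : ℕ) (s : Finset (Fin n)) : fp (good n m b s) ≤ b := by
  classical
  unfold fp
  split_ifs with h
  · exact (Nat.find_spec h).1
  · omega

noncomputable def sig (n m b : ℕ) (s : Finset (Fin n)) : Finset (Fin n) :=
  s.image (tau n m (fp (good n m b s)))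

lemma good_tau (n m p b : ℕ) (h1 : m + b = n) (h2 : b + 2 ≤ m) (hp : p ≤ b)
    (s : Finset (Fin n)) : good n m b (s.image (tau n m p)) = good n m b s := by
  funext q
  unfold good
  apply propext
  apply and_congr_right
  intro hq
  rw [Finset.forall_mem_image]
  apply forall₂_congr
  intro v hv
  have := v.2
  rw [tau_val]
  split_ifs <;> omega

lemma sig_sig (n m b : ℕ) (h1 : m + b = n) (h2 : b + 2 ≤ m) (s : Finset (Fin n)) :
    sig n m b (sig n m b s) = s := by
  have hp := fp_le n m b s
  unfold sig
  rw [good_tau n m _ b h1 h2 hp, Finset.image_image,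
    (tau_inv n m _ b h1 h2 hp).comp_self, Finset.image_id]

lemma sig_card (n m b : ℕ) (h1 : m + b = n) (h2 : b + 2 ≤ m) (s : Finset (Fin n)) :
    (sig n m b s).card = s.card :=
  Finset.card_image_of_injective _ (tau_inv n m _ b h1 h2 (fp_le n m b s)).injective

lemma bad (n m b : ℕ) (h2 : b + 2 ≤ m) (s : Finset (Fin n))
    (hs : s.card ≤ b + 1) (h : ¬ ∃ q, good n m b s q) : ∀ v ∈ s, v.val + 1 ≠ m := by
  intro w hw hwm
  have : Finset.range (b + 2) ⊆
      s.image (fun v => if v.val + 1 = m then b + 1 else if v.val < m then v.val else v.val - m) := by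
    intro q hq
    rw [Finset.mem_range] at hq
    rw [Finset.mem_image]
    by_cases hqb : q = b + 1
    · exact ⟨w, hw, by rw [if_pos hwm, hqb]⟩
    · by_contra hc
      apply h
      refine ⟨q, by omega, fun v hv => ?_⟩
      by_contra hcon
      apply hc
      refine ⟨v, hv, ?_⟩
      split_ifs <;> omega
  have h3 := Finset.card_le_card this
  have h4 := h3.trans Finset.card_image_le
  rw [Finset.card_range] at h4
  omega

lemma adj_iff (n m b : ℕ) (h1 : m + b = n) (h2 : b + 2 ≤ m) (hb : 1 ≤ b) (s : Finset (Fin n))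
    (hs : s.card ≤ b + 1) (u v : Fin n) (hu : u ∈ s) (hv : v ∈ s) :
    (cp n m).Adj (tau n m (fp (good n m b s)) u) (tau n m (fp (good n m b s)) v) ↔
      (pathGraph n).Adj u v := by
  classical
  have hp := fp_le n m b s
  have hinj := (tau_inv n m _ b h1 h2 hp).injective
  rw [pathGraph_adj]
  simp only [cp]
  rw [hinj.ne_iff, ← Fin.val_ne_iff, tau_val, tau_val]
  have hu2 := u.2
  have hv2 := v.2
  by_cases h : ∃ q, good n m b s q
  · have hg : good n m b s (fp (good n m b s)) := by
      unfold fp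
      rw [dif_pos h]
      exact Nat.find_spec h
    have h3 := hg.2 u hu
    have h4 := hg.2 v hv
    generalize fp (good n m b s) = p at *
    split_ifs <;> omega
  · have h3 := bad n m b h2 s hs h u hu
    have h4 := bad n m b h2 s hs h v hv
    have : fp (good n m b s) = 0 := by
      unfold fp
      rw [dif_neg h]
    rw [this]
    split_ifs <;> omega

noncomputable def iso (n m b : ℕ) (h1 : m + b = n) (h2 : b + 2 ≤ m) (hb : 1 ≤ b)
    (s : Finset (Fin n)) (hs : s.card ≤ b + 1) :
    (pathGraph n).induce (↑s : Set (Fin n)) ≃g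
      (cp n m).induce (↑(sig n m b s) : Set (Fin n)) where
  toEquiv := Equiv.ofBijective
    (fun v => ⟨tau n m (fp (good n m b s)) v.1,
      Finset.mem_coe.2 (Finset.mem_image_of_mem _ (Finset.mem_coe.1 v.2))⟩) (by
    constructor
    · intro u v huv
      apply Subtype.ext
      exact (tau_inv n m _ b h1 h2 (fp_le n m b s)).injective (congrArg Subtype.val huv)
    · rintro ⟨w, hw⟩
      obtain ⟨v, hv, rfl⟩ := Finset.mem_image.1 (Finset.mem_coe.1 hw)
      exact ⟨⟨v, Finset.mem_coe.2 hv⟩, rfl⟩)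
  map_rel_iff' := by
    rintro ⟨u, hu⟩ ⟨v, hv⟩
    exact adj_iff n m b h1 h2 hb s hs u v (Finset.mem_coe.1 hu) (Finset.mem_coe.1 hv)

lemma same (n m b k : ℕ) (h1 : m + b = n) (h2 : b + 2 ≤ m) (hb : 1 ≤ b) (hk : k ≤ b + 1) :
    SameDeck (pathGraph n) (cp n m) k := by
  intro H
  refine Set.ncard_congr (fun s _ => sig n m b s) ?_ ?_ ?_
  · rintro s ⟨hs, ⟨e⟩⟩
    exact ⟨by rw [sig_card n m b h1 h2, hs], ⟨(iso n m b h1 h2 hb s (by omega)).symm.trans e⟩⟩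
  · intro s t _ _ hst
    have := congrArg (sig n m b) hst
    simpa only [sig_sig n m b h1 h2] using this
  · rintro t ⟨ht, ⟨e⟩⟩
    have hc := sig_card n m b h1 h2 t
    have i := iso n m b h1 h2 hb (sig n m b t) (by omega)
    rw [sig_sig n m b h1 h2] at i
    exact ⟨sig n m b t, ⟨by omega, ⟨i.trans e⟩⟩, sig_sig n m b h1 h2 t⟩

lemma ncard_le_two {n : ℕ} (S : Set (Fin n)) (a c : ℕ) (h : ∀ v ∈ S, v.val = a ∨ v.val = c) :
    S.ncard ≤ 2 := by
  rw [← Set.ncard_image_of_injective S Fin.val_injective]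
  refine (Set.ncard_le_ncard (t := ({a, c} : Set ℕ)) ?_ (Set.toFinite _)).trans
    (by simpa using Set.ncard_insert_le a ({c} : Set ℕ))
  rintro _ ⟨v, hv, rfl⟩
  exact h v hv

lemma cp_not_conn (n m b : ℕ) (h1 : m + b = n) (h2 : b + 2 ≤ m) (hb : 1 ≤ b) :
    ¬ (cp n m).Connected := by
  intro h
  have key : ∀ u v : Fin n, (cp n m).Reachable u v → (u.val < m ↔ v.val < m) := by
    rintro u v ⟨w⟩
    induction w with
    | nil => rfl
    | cons hadj _ ih =>
      rw [← ih]
      simp only [cp] at hadj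
      omega
  have := key ⟨0, by omega⟩ ⟨m, by omega⟩ (h.preconnected _ _)
  simp only at this
  omega

end Deck5

open Deck5 in
theorem stmt_5 (n : ℕ) (hn : 4 ≤ n) :
    (∃ G G' : SimpleGraph (Fin n),
      (∀ v, (G.neighborSet v).ncard ≤ 2) ∧ (∀ v, (G'.neighborSet v).ncard ≤ 2) ∧
      G.Connected ∧ ¬ G'.Connected ∧ SameDeck G G' (n / 2)) ∧
    (∀ k : ℕ,
      (∀ G G' : SimpleGraph (Fin n), SameDeck G G' k → (G.Connected ↔ G'.Connected)) →
      n / 2 + 1 ≤ k) := by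
  obtain ⟨b, hb⟩ : ∃ b, b = n / 2 - 1 := ⟨_, rfl⟩
  obtain ⟨m, hm⟩ : ∃ m, m = n - b := ⟨_, rfl⟩
  have h1 : m + b = n := by omega
  have h2 : b + 2 ≤ m := by omega
  have h3 : 1 ≤ b := by omega
  have hG : (pathGraph n).Connected := by
    obtain ⟨j, rfl⟩ : ∃ j, n = j + 1 := ⟨n - 1, by omega⟩
    exact pathGraph_connected j
  have hG' := cp_not_conn n m b h1 h2 h3
  refine ⟨⟨pathGraph n, cp n m, ?_, ?_, hG, hG', same n m b _ h1 h2 h3 (by omega)⟩, ?_⟩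
  · intro v
    apply ncard_le_two _ (v.val + 1) (v.val - 1)
    intro w hw
    rw [mem_neighborSet, pathGraph_adj] at hw
    omega
  · intro v
    apply ncard_le_two _ (if v.val + 1 = m then 0 else v.val + 1)
      (if v.val = 0 then m - 1 else v.val - 1)
    intro w hw
    rw [mem_neighborSet] at hw
    simp only [cp] at hw
    split_ifs <;> omega
  · intro k hk
    by_contra hc
    exact hG' ((hk _ _ (same n m b k h1 h2 h3 (by omega))).1 hG)
end

section
/- For every natural number n ≥ 6: (a) every finite simple graph having the same (⌊n/2⌋+1)-deck as the path P_n is isomorphic to P_n; and (b) there exists a finite simple graph not isomorphic to P_n having the same ⌊n/2⌋-deck as P_n. Hence ρ(P_n) = ⌊n/2⌋ + 1. -/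
open SimpleGraph

/-! ### Part (b) -/

def altG (n K : ℕ) : SimpleGraph (Fin n) where
  Adj x y := x ≠ y ∧ ((x.val + 1 = y.val ∧ y.val + 1 ≠ K) ∨ (y.val + 1 = x.val ∧ x.val + 1 ≠ K) ∨
    (x.val + 1 = K ∧ y.val + 1 = n) ∨ (y.val + 1 = K ∧ x.val + 1 = n))
  symm := ⟨fun x y h => by
    obtain ⟨h1, h2⟩ := h
    exact ⟨h1.symm, by omega⟩⟩
  loopless := ⟨fun x h => h.1 rfl⟩

theorem altG_adj {n K : ℕ} (hK : 2 * K ≤ n) (h3 : 3 ≤ K) (x y : Fin n) : (altG n K).Adj x y ↔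
    ((x.val + 1 = y.val ∧ y.val + 1 ≠ K) ∨ (y.val + 1 = x.val ∧ x.val + 1 ≠ K) ∨
    (x.val + 1 = K ∧ y.val + 1 = n) ∨ (y.val + 1 = K ∧ x.val + 1 = n)) := by
  constructor
  · exact fun h => h.2
  · intro h
    refine ⟨?_, h⟩
    rintro rfl
    omega

def sigN (n K j x : ℕ) : ℕ :=
  if K ≤ x + 1 + j ∧ x + 1 < K then x + (n + 1 - K)
  else if n ≤ x + j then x - (n + 1 - K) else x

theorem sigN_lt {n K j x : ℕ} (hK : 2 * K ≤ n) (hj : j < K) (hx : x < n) : sigN n K j x < n := by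
  unfold sigN; split_ifs <;> omega

theorem sigN_sigN {n K j x : ℕ} (hK : 2 * K ≤ n) (hj : j < K) (hx : x < n) :
    sigN n K j (sigN n K j x) = x := by
  unfold sigN; split_ifs <;> omega

def sig {n K j : ℕ} (hK : 2 * K ≤ n) (hj : j < K) : Equiv.Perm (Fin n) where
  toFun x := ⟨sigN n K j x, sigN_lt hK hj x.2⟩
  invFun x := ⟨sigN n K j x, sigN_lt hK hj x.2⟩
  left_inv x := Fin.ext (sigN_sigN hK hj x.2)
  right_inv x := Fin.ext (sigN_sigN hK hj x.2)

theorem sig_sig {n K j : ℕ} (hK : 2 * K ≤ n) (hj : j < K) (x : Fin n) :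
    sig hK hj (sig hK hj x) = x := (sig hK hj).left_inv x

def Gap (n K : ℕ) (S : Finset (Fin n)) (j : ℕ) : Prop :=
  ∀ x ∈ S, x.val + 1 + j ≠ n ∧ x.val + 2 + j ≠ K

theorem gap_iff {n K j i : ℕ} (hK : 2 * K ≤ n) (hj : j < K) (hi : i ≤ j) (S : Finset (Fin n)) :
    Gap n K (S.map (sig hK hj).toEmbedding) i ↔ Gap n K S i := by
  unfold Gap
  constructor
  · intro h x hx
    by_cases hc : i = j
    · have := h (sig hK hj x) (Finset.mem_map_of_mem _ hx)
      simp only [sig, Equiv.coe_fn_mk, sigN] at this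
      split_ifs at this <;> omega
    · have := h (sig hK hj x) (Finset.mem_map_of_mem _ hx)
      simp only [sig, Equiv.coe_fn_mk, sigN] at this
      split_ifs at this <;> omega
  · intro h y hy
    obtain ⟨x, hx, rfl⟩ := Finset.mem_map.1 hy
    have := h x hx
    simp only [sig, Equiv.coe_toEmbedding, Equiv.coe_fn_mk, sigN]
    split_ifs <;> omega

theorem exists_gap {n K : ℕ} (hK : 2 * K ≤ n) (h3 : 3 ≤ K) (S : Finset (Fin n)) (hS : S.card ≤ K)
    (w : Fin n) (hw : w.val + 1 = K) (hwS : w ∈ S) : ∃ j, j < K ∧ Gap n K S j := by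
  by_contra! hcon
  -- each j < K gives an element
  have hx : ∀ j : Fin K, ∃ x ∈ S.erase w, x.val + 1 + j.val = n ∨ x.val + 2 + j.val = K := by
    intro j
    have := hcon j j.2
    unfold Gap at this
    push Not at this
    obtain ⟨x, hx, h⟩ := this
    refine ⟨x, ?_, by omega⟩
    rw [Finset.mem_erase]
    refine ⟨?_, hx⟩
    rintro rfl
    have := j.2
    omega
  choose f hf hf2 using hx
  have hcard : (Finset.univ : Finset (Fin K)).card ≤ (S.erase w).card := by
    apply Finset.card_le_card_of_injOn f
    · intro j _; exact hf j
    · intro a _ b _ hab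
      have h1 := hf2 a
      have h2 := hf2 b
      rw [hab] at h1
      have := a.2
      have := b.2
      apply Fin.ext
      omega
  rw [Finset.card_erase_of_mem hwS, Finset.card_univ, Fintype.card_fin] at hcard
  omega

theorem sig_adj {n K j : ℕ} (hK : 2 * K ≤ n) (h3 : 3 ≤ K) (hj : j < K) (x y : Fin n)
    (hx : x.val + 1 + j ≠ n ∧ x.val + 2 + j ≠ K) (hy : y.val + 1 + j ≠ n ∧ y.val + 2 + j ≠ K) :
    (altG n K).Adj (sig hK hj x) (sig hK hj y) ↔ (pathGraph n).Adj x y := by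
  rw [altG_adj hK h3, pathGraph_adj]
  have := x.2
  have := y.2
  simp only [sig, Equiv.coe_fn_mk, sigN]
  split_ifs <;> omega

open Classical in
noncomputable def Phi {n K : ℕ} (hK : 2 * K ≤ n) (S : Finset (Fin n)) : Finset (Fin n) :=
  if h : (∃ j, j < K ∧ Gap n K S j) ∧ (∃ w ∈ S, w.val + 1 = K) then
    S.map (sig hK (Nat.find_spec h.1).1).toEmbedding else S

theorem Phi_spec {n K : ℕ} (hK : 2 * K ≤ n) (h3 : 3 ≤ K) (S : Finset (Fin n)) (hS : S.card ≤ K) :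
    (Phi hK S).card = S.card ∧ Phi hK (Phi hK S) = S ∧
    Nonempty ((altG n K).induce (↑(Phi hK S) : Set (Fin n)) ≃g
      (pathGraph n).induce (↑S : Set (Fin n))) := by
  classical
  by_cases hw : ∃ w ∈ S, w.val + 1 = K
  · have hg : ∃ j, j < K ∧ Gap n K S j := by
      obtain ⟨w, h1, h2⟩ := hw
      exact exists_gap hK h3 S hS w h2 h1
    have hP : ∀ j (hj : j < K), Gap n K S j → (∀ i < j, ¬ Gap n K S i) →
        Phi hK S = S.map (sig hK hj).toEmbedding := by
      intro j hj h1 h2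
      have : j = Nat.find hg := by
        symm
        rw [Nat.find_eq_iff]
        exact ⟨⟨hj, h1⟩, fun i hi h => h2 i hi h.2⟩
      subst this
      unfold Phi
      rw [dif_pos ⟨hg, hw⟩]
    obtain ⟨j, hj, h1, h2⟩ : ∃ j, ∃ hj : j < K, Gap n K S j ∧ (∀ i < j, ¬ Gap n K S i) :=
      ⟨Nat.find hg, (Nat.find_spec hg).1, (Nat.find_spec hg).2, fun i hi h =>
        Nat.find_min hg hi ⟨lt_trans hi (Nat.find_spec hg).1, h⟩⟩
    rw [hP j hj h1 h2]
    refine ⟨Finset.card_map _, ?_, ?_⟩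
    · set T := S.map (sig hK hj).toEmbedding with hT
      have hTg : ∃ j, j < K ∧ Gap n K T j := ⟨j, hj, (gap_iff hK hj le_rfl S).2 h1⟩
      have hTw : ∃ w ∈ T, w.val + 1 = K := by
        obtain ⟨w, hw1, hw2⟩ := hw
        refine ⟨sig hK hj w, Finset.mem_map_of_mem _ hw1, ?_⟩
        simp only [sig, Equiv.coe_fn_mk, sigN]
        split_ifs <;> omega
      have hjj : j = Nat.find hTg := by
        symm
        rw [Nat.find_eq_iff]
        exact ⟨⟨hj, (gap_iff hK hj le_rfl S).2 h1⟩, fun i hi h =>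
          h2 i hi ((gap_iff hK hj hi.le S).1 h.2)⟩
      have : Phi hK T = T.map (sig hK hj).toEmbedding := by
        unfold Phi
        rw [dif_pos ⟨hTg, hTw⟩]
        congr 3
        exact hjj.symm
      rw [this, hT]
      ext x
      simp only [Finset.mem_map, Equiv.coe_toEmbedding]
      constructor
      · rintro ⟨_, ⟨y, hy, rfl⟩, rfl⟩
        rwa [sig_sig]
      · intro hx
        exact ⟨_, ⟨x, hx, rfl⟩, sig_sig hK hj x⟩
    · refine ⟨RelIso.symm ⟨(sig hK hj).subtypeEquiv ?_, ?_⟩⟩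
      · intro a
        simp
      · intro a b
        simp only [comap_adj, Equiv.subtypeEquiv_apply, Function.Embedding.subtype_apply]
        exact sig_adj hK h3 hj _ _ (h1 _ a.2) (h1 _ b.2)
  · have : Phi hK S = S := by
      unfold Phi
      rw [dif_neg (fun h => hw h.2)]
    rw [this]
    refine ⟨rfl, this, ⟨⟨Equiv.refl _, ?_⟩⟩⟩
    intro a b
    simp only [comap_adj, Equiv.refl_apply, Function.Embedding.subtype_apply]
    rw [altG_adj hK h3, pathGraph_adj]
    push Not at hw
    have h1 := hw a.1 a.2
    have h2 := hw b.1 b.2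
    omega

theorem altG_sameDeck {n K k : ℕ} (hK : 2 * K ≤ n) (h3 : 3 ≤ K) (hk : k ≤ K) :
    SameDeck (altG n K) (pathGraph n) k := by
  intro X
  symm
  apply Set.ncard_congr (fun S _ => Phi hK S)
  · rintro S ⟨hS, ⟨f⟩⟩
    obtain ⟨h1, _, ⟨g⟩⟩ := Phi_spec hK h3 S (by omega)
    exact ⟨h1.trans hS, ⟨g.trans f⟩⟩
  · rintro S T ⟨hS, _⟩ ⟨hT, _⟩ h
    obtain ⟨_, h1, _⟩ := Phi_spec hK h3 S (by omega)
    obtain ⟨_, h2, _⟩ := Phi_spec hK h3 T (by omega)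
    rw [← h1, h, h2]
  · rintro S ⟨hS, ⟨f⟩⟩
    obtain ⟨h1, h2, _⟩ := Phi_spec hK h3 S (by omega)
    obtain ⟨_, _, ⟨g⟩⟩ := Phi_spec hK h3 (Phi hK S) (by omega)
    rw [h2] at g
    exact ⟨Phi hK S, ⟨h1.trans hS, ⟨g.symm.trans f⟩⟩, h2⟩

theorem altG_not_iso {n K : ℕ} (hK : 2 * K ≤ n) (h3 : 3 ≤ K) :
    ¬ Nonempty (altG n K ≃g pathGraph n) := by
  rintro ⟨f⟩
  obtain ⟨m, rfl⟩ : ∃ m, n = m + 1 := ⟨n - 1, by omega⟩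
  have hc : (altG (m + 1) K).Connected := f.connected_iff.2 (pathGraph_connected m)
  have key : ∀ x y : Fin (m + 1), (altG (m + 1) K).Reachable x y → x.val + 1 < K →
      y.val + 1 < K := by
    rintro x y ⟨p⟩
    induction p with
    | nil => exact id
    | cons h p ih =>
      intro hx
      apply ih
      rw [altG_adj hK h3] at h
      omega
  have := key ⟨0, by omega⟩ ⟨K, by omega⟩ (hc.preconnected _ _) (by simp; omega)
  simp only at this
  omega

/-! ### Part (a) -/

/-- If an induced subgraph is a path and meets an (internally) closed set, it lies inside it. -/
theorem closed_of_iso {V : Type*} {G : SimpleGraph V} {S : Set V} {k : ℕ}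
    (f : G.induce S ≃g pathGraph k) (A : Set V)
    (hA : ∀ x ∈ S, ∀ y ∈ S, G.Adj x y → x ∈ A → y ∈ A) (x : V) (hx : x ∈ S) (hxA : x ∈ A) :
    S ⊆ A := by
  intro y hy
  have key : ∀ a b : S, (G.induce S).Reachable a b → a.1 ∈ A → b.1 ∈ A := by
    rintro a b ⟨p⟩
    induction p with
    | nil => exact id
    | cons h p ih => exact fun ha => ih (hA _ (Subtype.prop _) _ (Subtype.prop _) h ha)
  refine key ⟨x, hx⟩ ⟨y, hy⟩ ?_ hxA
  exact (f.preconnected_iff.2 (pathGraph_preconnected k)) _ _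

noncomputable def cntP {V : Type*} (G : SimpleGraph V) (k : ℕ) : ℕ :=
  Set.ncard {s : Finset V | s.card = k ∧ Nonempty ((G.induce (↑s : Set V)) ≃g pathGraph k)}

/-- The set of vertices of an embedded graph induces this graph. -/
theorem iso_of_emb {V W : Type*} [Fintype V] {G : SimpleGraph V} {H : SimpleGraph W}
    (f : G ↪g H) (S : Finset V) :
    Nonempty (H.induce (↑(S.map f.toEmbedding) : Set W) ≃g G.induce (↑S : Set V)) := by
  refine ⟨RelIso.symm ⟨Equiv.ofBijective
    (fun x : (↑S : Set V) => ⟨f x.1, by simp⟩) ⟨?_, ?_⟩, ?_⟩⟩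
  · intro a b h
    exact Subtype.ext (f.injective (congrArg Subtype.val h))
  · rintro ⟨y, hy⟩
    obtain ⟨x, hx, rfl⟩ := Finset.mem_map.1 (Finset.mem_coe.1 hy)
    exact ⟨⟨x, hx⟩, rfl⟩
  · intro a b
    exact f.map_rel_iff

theorem iso_of_emb_univ {V W : Type*} [Fintype V] {G : SimpleGraph V} {H : SimpleGraph W}
    (f : G ↪g H) :
    Nonempty (H.induce (↑(Finset.univ.map f.toEmbedding) : Set W) ≃g G) := by
  obtain ⟨g⟩ := iso_of_emb f Finset.univ
  refine ⟨g.trans ⟨⟨fun x => x.1, fun x => ⟨x, by simp⟩, fun x => rfl, fun x => rfl⟩, ?_⟩⟩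
  intro a b
  rfl

/-- The interval embedding. -/
def intEmb {k m : ℕ} (a : ℕ) (h : a + k ≤ m) : pathGraph k ↪g pathGraph m where
  toFun x := ⟨a + x.val, by omega⟩
  inj' x y hxy := by
    have := congrArg Fin.val hxy
    simp only at this
    exact Fin.ext (by omega)
  map_rel_iff' := by
    intro x y
    rw [pathGraph_adj, pathGraph_adj]
    change (a + x.val + 1 = a + y.val ∨ a + y.val + 1 = a + x.val) ↔ _
    omega

theorem intEmb_val {k m : ℕ} (a : ℕ) (h : a + k ≤ m) (x : Fin k) :
    ((intEmb a h).toEmbedding x).val = a + x.val := rfl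

theorem mem_intEmb {k m : ℕ} (a : ℕ) (h : a + k ≤ m) (x : Fin m) :
    x ∈ Finset.univ.map (intEmb a h).toEmbedding ↔ a ≤ x.val ∧ x.val < a + k := by
  simp only [Finset.mem_map, Finset.mem_univ, true_and]
  constructor
  · rintro ⟨y, rfl⟩
    rw [intEmb_val]
    omega
  · rintro ⟨h1, h2⟩
    refine ⟨⟨x.val - a, by omega⟩, ?_⟩
    apply Fin.ext
    rw [intEmb_val]
    simp only
    omega

theorem cntP_path {k m : ℕ} (hk : 1 ≤ k) (hm : k ≤ m) : cntP (pathGraph m) k = m - k + 1 := by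
  classical
  unfold cntP
  rw [← Set.ncard_coe_finset (Finset.range (m - k + 1)) |>.trans (Finset.card_range _)]
  symm
  have hle : ∀ a ∈ (↑(Finset.range (m - k + 1)) : Set ℕ), a + k ≤ m := by
    intro a ha
    simp at ha
    omega
  apply Set.ncard_congr
    (fun a ha => Finset.univ.map (intEmb (k := k) (m := m) a (hle a ha)).toEmbedding)
  · intro a ha
    exact ⟨by simp, iso_of_emb_univ _⟩
  · intro a b ha hb h
    have h1 := hle a ha
    have h2 := hle b hb
    have e1 := mem_intEmb a h1 ⟨a, by omega⟩
    have e2 := mem_intEmb a h1 ⟨b, by omega⟩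
    rw [h, mem_intEmb] at e1 e2
    simp only at e1 e2
    omega
  · rintro S ⟨hS, ⟨f⟩⟩
    have hne : S.Nonempty := Finset.card_pos.1 (by omega)
    obtain ⟨a, haS, hmin⟩ := S.exists_min_image id hne
    -- convexity
    have hconv : ∀ b ∈ S, ∀ c : Fin m, a.val ≤ c.val → c.val ≤ b.val → c ∈ S := by
      intro b hb c hac hcb
      by_contra hc
      have := closed_of_iso f {x | x.val < c.val} (by
        intro x hx y hy hxy hxc
        simp only [Set.mem_ofPred_eq] at hxc ⊢
        rw [pathGraph_adj] at hxy
        have : y ≠ c := fun h => hc (h ▸ hy)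
        have : y.val ≠ c.val := fun h => this (Fin.ext h)
        omega) a haS (by
          have : a ≠ c := fun h => hc (h ▸ haS)
          have : a.val ≠ c.val := fun h => this (Fin.ext h)
          simp only [Set.mem_ofPred_eq]; omega)
      have := this (Finset.mem_coe.2 hb)
      simp only [Set.mem_ofPred_eq] at this
      omega
    obtain ⟨b, hbS, hmax⟩ := S.exists_max_image id hne
    have hSI : S = Finset.Icc a b := by
      ext c
      rw [Finset.mem_Icc]
      constructor
      · exact fun hc => ⟨hmin c hc, hmax c hc⟩
      · exact fun hc => hconv b hbS c hc.1 hc.2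
    have hcard : b.val + 1 - a.val = k := by
      rw [← hS, hSI, Fin.card_Icc]
    have hab : a + k ≤ m := by have := b.2; have := hmin b hbS; simp at this; omega
    refine ⟨a.val, by simp; omega, ?_⟩
    ext x
    rw [mem_intEmb, hSI, Finset.mem_Icc, Fin.le_def, Fin.le_def]
    omega

/-- Total number of `k`-subsets agrees. -/
theorem choose_eq_of_sameDeck {V W : Type} [Fintype V] [Fintype W]
    {G : SimpleGraph V} {G' : SimpleGraph W} {k : ℕ} (h : SameDeck G G' k) :
    (Fintype.card V).choose k = (Fintype.card W).choose k := by
  classical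
  let st : Setoid (SimpleGraph (Fin k)) :=
    ⟨fun A B => Nonempty (A ≃g B), fun A => ⟨RelIso.refl _⟩, fun ⟨f⟩ => ⟨f.symm⟩,
      fun ⟨f⟩ ⟨g⟩ => ⟨f.trans g⟩⟩
  have gen : ∀ (U : Type) [Fintype U] (F : SimpleGraph U),
      (Fintype.card U).choose k = ∑ q : Quotient st,
        Set.ncard {s : Finset U | s.card = k ∧ Nonempty ((F.induce (↑s : Set U)) ≃g q.out)} := by
    intro U _ F
    have hX : ∀ S : Finset U, ∃ X : SimpleGraph (Fin k), S.card = k →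
        Nonempty (F.induce (↑S : Set U) ≃g X) := by
      intro S
      by_cases hS : S.card = k
      · let e : (↑S : Set U) ≃ Fin k := Fintype.equivFinOfCardEq (by simpa using hS)
        exact ⟨(F.induce (↑S : Set U)).map e.toEmbedding, fun _ => ⟨SimpleGraph.Iso.map e _⟩⟩
      · exact ⟨⊥, fun h => absurd h hS⟩
    choose X hX using hX
    have := Finset.card_eq_sum_card_fiberwise (s := Finset.powersetCard k (Finset.univ : Finset U))
      (t := (Finset.univ : Finset (Quotient st))) (f := fun S => Quotient.mk st (X S))
      (fun _ _ => Finset.mem_coe.2 (Finset.mem_univ _))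
    rw [Finset.card_powersetCard, Finset.card_univ] at this
    rw [this]
    refine Finset.sum_congr rfl fun q _ => ?_
    rw [← Set.ncard_coe_finset]
    congr 1
    ext S
    simp only [Finset.coe_filter, Finset.mem_powersetCard, Finset.subset_univ, true_and,
      Set.mem_ofPred_eq]
    refine and_congr_right fun hS => ?_
    obtain ⟨f⟩ := hX S hS
    constructor
    · intro hq
      have : st (X S) q.out := Quotient.exact (hq.trans q.out_eq.symm)
      obtain ⟨g⟩ := this
      exact ⟨f.trans g⟩
    · rintro ⟨g⟩
      rw [← q.out_eq]
      exact Quotient.sound ⟨f.symm.trans g⟩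
  rw [gen V G, gen W G']
  exact Finset.sum_congr rfl fun q _ => h _

theorem le_of_choose_eq {N n k : ℕ} (hk : 1 ≤ k) (hn : k ≤ n) (h : N.choose k = n.choose k) :
    N ≤ n := by
  by_contra! hlt
  have h1 : (n + 1).choose k ≤ N.choose k := Nat.choose_le_choose k hlt
  obtain ⟨j, rfl⟩ : ∃ j, k = j + 1 := ⟨k - 1, by omega⟩
  rw [Nat.choose_succ_succ'] at h1
  have : 0 < n.choose j := Nat.choose_pos (by omega)
  omega

/-- Every `k`-subset of `G` has a counterpart in `G'`. -/
theorem exists_counterpart {V W : Type*} [Fintype V] [Fintype W]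
    {G : SimpleGraph V} {G' : SimpleGraph W} {k : ℕ} (h : SameDeck G G' k)
    (S : Finset V) (hS : S.card = k) :
    ∃ T : Finset W, Nonempty (G.induce (↑S : Set V) ≃g G'.induce (↑T : Set W)) := by
  classical
  obtain ⟨e⟩ : Nonempty ((↑S : Set V) ≃ Fin k) :=
    ⟨Fintype.equivFinOfCardEq (by simpa using hS)⟩
  let X : SimpleGraph (Fin k) := (G.induce (↑S : Set V)).map e.toEmbedding
  have f : G.induce (↑S : Set V) ≃g X := SimpleGraph.Iso.map e _
  have h1 := h X
  have h2 : 0 < Set.ncard {s : Finset V | s.card = k ∧ Nonempty ((G.induce (↑s : Set V)) ≃g X)} :=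
    (Set.ncard_pos (Set.toFinite _)).2 ⟨S, hS, ⟨f⟩⟩
  rw [h1, Set.ncard_pos (Set.toFinite _)] at h2
  obtain ⟨T, _, ⟨g⟩⟩ := h2
  exact ⟨T, ⟨f.trans g.symm⟩⟩

/-- Max degree at most two. -/
theorem no_three {V : Type*} [Fintype V] {G : SimpleGraph V} {n k : ℕ}
    (h : SameDeck G (pathGraph n) k) (hk : 4 ≤ k) (hV : k ≤ Fintype.card V) (v a b c : V)
    (ha : G.Adj v a) (hb : G.Adj v b) (hc : G.Adj v c) (hab : a ≠ b) (hac : a ≠ c) :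
    b = c := by
  classical
  by_contra hbc
  obtain ⟨S, hsub, hS⟩ := Finset.exists_superset_card_eq (s := ({v, a, b, c} : Finset V))
    (n := k) ((Finset.card_le_four).trans hk) hV
  obtain ⟨T, ⟨f⟩⟩ := exists_counterpart h S hS
  have hm : ∀ x ∈ ({v, a, b, c} : Finset V), x ∈ (↑S : Set V) := fun x hx => hsub hx
  have key : ∀ x (hx : x ∈ (↑S : Set V)), G.Adj v x →
      (pathGraph n).Adj (f ⟨v, hm v (by simp)⟩).1 (f ⟨x, hx⟩).1 := by
    intro x hx hvx
    exact f.map_rel_iff.2 (show (G.induce _).Adj ⟨v, _⟩ ⟨x, _⟩ from hvx)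
  have inj : ∀ x (hx : x ∈ (↑S : Set V)) y (hy : y ∈ (↑S : Set V)), x ≠ y →
      (f ⟨x, hx⟩).1.val ≠ (f ⟨y, hy⟩).1.val := by
    intro x hx y hy hxy h
    apply hxy
    have := f.injective (Subtype.ext (Fin.ext h))
    exact congrArg Subtype.val this
  have k1 := key a (hm a (by simp)) ha
  have k2 := key b (hm b (by simp)) hb
  have k3 := key c (hm c (by simp)) hc
  have i1 := inj a (hm a (by simp)) b (hm b (by simp)) hab
  have i2 := inj a (hm a (by simp)) c (hm c (by simp)) hac
  have i3 := inj b (hm b (by simp)) c (hm c (by simp)) hbc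
  rw [pathGraph_adj] at k1 k2 k3
  omega

/-- `f` restricted to `0, …, m-1` is an induced path. -/
def IndPath {V : Type*} (G : SimpleGraph V) (m : ℕ) (f : ℕ → V) : Prop :=
  ∀ x < m, ∀ y < m, (f x = f y → x = y) ∧ (G.Adj (f x) (f y) ↔ x + 1 = y ∨ y + 1 = x)

def IndPath.emb {V : Type*} {G : SimpleGraph V} {m : ℕ} {f : ℕ → V} (h : IndPath G m f) :
    pathGraph m ↪g G where
  toFun x := f x.val
  inj' x y hxy := Fin.ext ((h x x.2 y y.2).1 hxy)
  map_rel_iff' := by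
    intro x y
    rw [pathGraph_adj]
    exact (h x x.2 y y.2).2

theorem IndPath.mem_map {V : Type*} {G : SimpleGraph V} {m : ℕ} {f : ℕ → V} (h : IndPath G m f)
    (v : V) : v ∈ Finset.univ.map h.emb.toEmbedding ↔ ∃ i < m, f i = v := by
  simp only [Finset.mem_map, Finset.mem_univ, true_and]
  constructor
  · rintro ⟨y, rfl⟩
    exact ⟨y.val, y.2, rfl⟩
  · rintro ⟨i, hi, rfl⟩
    exact ⟨⟨i, hi⟩, rfl⟩

theorem IndPath.mem_cnt {V : Type*} {G : SimpleGraph V} {m : ℕ} {f : ℕ → V} (h : IndPath G m f) :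
    Finset.univ.map h.emb.toEmbedding ∈
     {s : Finset V | s.card = m ∧ Nonempty ((G.induce (↑s : Set V)) ≃g pathGraph m)} :=
  ⟨by simp, iso_of_emb_univ _⟩

theorem IndPath.rev {V : Type*} {G : SimpleGraph V} {m : ℕ} {f : ℕ → V} (h : IndPath G m f) :
    IndPath G m (fun x => f (m - 1 - x)) := by
  intro x hx y hy
  have := h (m - 1 - x) (by omega) (m - 1 - y) (by omega)
  refine ⟨fun e => ?_, ?_⟩
  · have := this.1 e
    omega
  · simp only
    rw [this.2]
    omega

/-- arc index -/
def arcN (m i t : ℕ) : ℕ := if i + t < m + 1 then i + t else i + t - (m + 1)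

/-- An induced cycle on `m+1 > k` vertices contains at least `m+1` induced `P_k`. -/
theorem cycle_cnt {V : Type*} [Fintype V] {G : SimpleGraph V} {m k : ℕ} (hk : 1 ≤ k) (hm : k ≤ m)
    (hm2 : 2 ≤ m) (g : ℕ → V) (hinj : ∀ x < m + 1, ∀ y < m + 1, g x = g y → x = y)
    (hadj : ∀ x < m + 1, ∀ y < m + 1, (G.Adj (g x) (g y) ↔
      (x + 1 = y ∨ y + 1 = x ∨ (x = 0 ∧ y = m) ∨ (y = 0 ∧ x = m)))) :
    m + 1 ≤ cntP G k := by
  classical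
  have hlt : ∀ i < m + 1, ∀ t < k, arcN m i t < m + 1 := by
    intro i hi t ht
    unfold arcN; split_ifs <;> omega
  have hp : ∀ i, i ∈ (↑(Finset.range (m + 1)) : Set ℕ) → IndPath G k (fun t => g (arcN m i t)) := by
    intro i hi x hx y hy
    have hi : i < m + 1 := by simpa using hi
    simp only
    refine ⟨fun e => ?_, ?_⟩
    · have := hinj _ (hlt i hi x hx) _ (hlt i hi y hy) e
      unfold arcN at this
      split_ifs at this <;> omega
    · rw [hadj _ (hlt i hi x hx) _ (hlt i hi y hy)]
      unfold arcN
      split_ifs <;> omega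
  rw [← Set.ncard_coe_finset (Finset.range (m + 1)) |>.trans (Finset.card_range _)]
  unfold cntP
  have hmem : ∀ i (hi : i ∈ (↑(Finset.range (m + 1)) : Set ℕ)), ∀ x < m + 1,
      (g x ∈ Finset.univ.map (hp i hi).emb.toEmbedding ↔ ∃ t < k, arcN m i t = x) := by
    intro i hi x hx
    have hi' : i < m + 1 := by simpa using hi
    rw [IndPath.mem_map]
    constructor
    · rintro ⟨t, ht, e⟩
      exact ⟨t, ht, hinj _ (hlt i hi' t ht) _ hx e⟩
    · rintro ⟨t, ht, e⟩
      exact ⟨t, ht, by rw [e]⟩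
  let F : ℕ → Finset V := fun i => if hi : i ∈ (↑(Finset.range (m + 1)) : Set ℕ) then
    Finset.univ.map (hp i hi).emb.toEmbedding else ∅
  have hF : ∀ i (hi : i ∈ (↑(Finset.range (m + 1)) : Set ℕ)),
      F i = Finset.univ.map (hp i hi).emb.toEmbedding := fun i hi => dif_pos hi
  apply Set.ncard_le_ncard_of_injOn F
  · intro i hi
    rw [hF i hi]
    exact (hp i hi).mem_cnt
  · intro i hi j hj hij
    rw [hF i hi, hF j hj] at hij
    have hi' : i < m + 1 := by simpa using hi
    have hj' : j < m + 1 := by simpa using hj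
    have h1 := (hmem i hi i hi').2 ⟨0, by omega, by simp [arcN, hi']⟩
    rw [hij, hmem j hj i hi'] at h1
    obtain ⟨t, ht, e⟩ := h1
    by_contra hne
    have ht0 : t ≠ 0 := by
      rintro rfl
      unfold arcN at e
      split_ifs at e <;> omega
    have h2 := (hmem j hj (arcN m j (t - 1)) (hlt j hj' _ (by omega))).2 ⟨t - 1, by omega, rfl⟩
    rw [← hij, hmem i hi _ (hlt j hj' _ (by omega))] at h2
    obtain ⟨s, hs, e2⟩ := h2
    unfold arcN at e e2
    split_ifs at e e2 <;> omega

theorem not_adj_end {V : Type*} [Fintype V] {G : SimpleGraph V} {n k m : ℕ}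
    (h : SameDeck G (pathGraph n) k) (hk : 4 ≤ k) (hV : k ≤ Fintype.card V) (hn : n < 2 * k)
    (hkn : k ≤ n) (hkm : k ≤ m) (hmax : ∀ f, ¬ IndPath G (m + 1) f) (f : ℕ → V)
    (hf : IndPath G m f) (u : V) (hu : ∀ i < m, f i ≠ u) : ¬ G.Adj u (f 0) := by
  intro hadj
  have hint : ∀ i, 1 ≤ i → i + 1 < m → ¬ G.Adj (f i) u := by
    intro i h1 h2 hc
    have e := no_three h hk hV (f i) (f (i - 1)) (f (i + 1)) u
      ((hf _ (by omega) _ (by omega)).2.2 (by omega))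
      ((hf _ (by omega) _ (by omega)).2.2 (by omega)) hc
      (fun e => by have := (hf _ (by omega) _ (by omega)).1 e; omega)
      (hu _ (by omega))
    exact hu _ h2 e
  let g : ℕ → V := fun x => if x = 0 then u else f (x - 1)
  have hg0 : g 0 = u := rfl
  have hg : ∀ x, g (x + 1) = f x := fun x => by simp [g]
  have hinj : ∀ x < m + 1, ∀ y < m + 1, g x = g y → x = y := by
    intro x hx y hy e
    rcases x with _ | x <;> rcases y with _ | y
    · rfl
    · rw [hg0, hg] at e
      exact absurd e.symm (hu _ (by omega))
    · rw [hg0, hg] at e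
      exact absurd e (hu _ (by omega))
    · rw [hg, hg] at e
      have := (hf _ (by omega) _ (by omega)).1 e
      omega
  by_cases hl : G.Adj (f (m - 1)) u
  · -- a cycle
    have hu' : ∀ x < m, (G.Adj u (f x) ↔ x = 0 ∨ x + 1 = m) := by
      intro x hx
      constructor
      · intro ha
        by_contra! hc
        exact hint x (by omega) (by omega) ha.symm
      · rintro (rfl | hx)
        · exact hadj
        · obtain rfl : x = m - 1 := by omega
          exact hl.symm
    have := cycle_cnt (G := G) (k := k) (m := m) (by omega) hkm (by omega) g hinj (by
      intro x hx y hy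
      rcases x with _ | x <;> rcases y with _ | y
      · simp
        omega
      · rw [hg0, hg, hu' _ (by omega)]
        omega
      · rw [hg0, hg, G.adj_comm, hu' _ (by omega)]
        omega
      · rw [hg, hg, (hf _ (by omega) _ (by omega)).2]
        omega)
    have h2 : cntP G k = cntP (pathGraph n) k := h (pathGraph k)
    rw [h2, cntP_path (by omega) hkn] at this
    omega
  · apply hmax g
    have hu' : ∀ x < m, (G.Adj u (f x) ↔ x = 0) := by
      intro x hx
      constructor
      · intro ha
        by_contra! hc
        by_cases hxm : x + 1 = m
        · obtain rfl : x = m - 1 := by omega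
          exact hl ha.symm
        · exact hint x (by omega) (by omega) ha.symm
      · rintro rfl
        exact hadj
    intro x hx y hy
    refine ⟨hinj x hx y hy, ?_⟩
    rcases x with _ | x <;> rcases y with _ | y
    · simp
    · rw [hg0, hg, hu' _ (by omega)]
      omega
    · rw [hg0, hg, G.adj_comm, hu' _ (by omega)]
      omega
    · rw [hg, hg, (hf _ (by omega) _ (by omega)).2]
      omega

theorem part_a {V : Type} [Fintype V] {G : SimpleGraph V} {n k : ℕ}
    (h : SameDeck G (pathGraph n) k) (hk : 4 ≤ k) (hn : n < 2 * k) (hkn : k ≤ n) :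
    Nonempty (G ≃g pathGraph n) := by
  classical
  have hN : Fintype.card V ≤ n := by
    have := choose_eq_of_sameDeck h
    rw [Fintype.card_fin] at this
    exact le_of_choose_eq (by omega) hkn this
  have hcnt : cntP G k = n - k + 1 := by
    rw [← cntP_path (by omega) hkn]
    exact h (pathGraph k)
  have hbd : ∀ m f, IndPath G m f → m ≤ Fintype.card V := by
    intro m f hf
    have := Fintype.card_le_of_injective _ hf.emb.injective
    simpa using this
  -- an induced `P_k`
  have hk0 : ∃ f, IndPath G k f := by
    have : 0 < cntP G k := by omega
    unfold cntP at this
    rw [Set.ncard_pos (Set.toFinite _)] at this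
    obtain ⟨S, _, ⟨e⟩⟩ := this
    refine ⟨fun x => (e.symm (if hx : x < k then ⟨x, hx⟩ else ⟨0, by omega⟩)).1, ?_⟩
    intro x hx y hy
    simp only [hx, hy, dif_pos]
    constructor
    · intro e1
      have := e.symm.injective (Subtype.ext e1)
      simpa using this
    · have := e.symm.map_rel_iff (a := ⟨x, hx⟩) (b := ⟨y, hy⟩)
      rw [pathGraph_adj] at this
      exact this
  have hV : k ≤ Fintype.card V := by
    obtain ⟨f, hf⟩ := hk0
    exact hbd _ _ hf
  obtain ⟨m, hkm, ⟨f, hf⟩, hmax⟩ : ∃ m, k ≤ m ∧ (∃ f, IndPath G m f) ∧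
      ∀ f, ¬ IndPath G (m + 1) f := by
    refine ⟨Nat.findGreatest (fun m => ∃ f, IndPath G m f) (Fintype.card V),
      Nat.le_findGreatest hV hk0,
      Nat.findGreatest_spec (P := fun m => ∃ f, IndPath G m f) hV hk0, ?_⟩
    intro f hf
    exact Nat.findGreatest_is_greatest (P := fun m => ∃ f, IndPath G m f)
      (Nat.lt_succ_self _) (hbd _ _ hf) ⟨f, hf⟩
  -- closedness
  have hclosed : ∀ i < m, ∀ u, G.Adj (f i) u → ∃ j < m, f j = u := by
    intro i hi u hadj
    by_contra! hu
    by_cases h0 : i = 0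
    · subst h0
      exact not_adj_end h hk hV hn hkn hkm hmax f hf u hu hadj.symm
    · by_cases h1 : i + 1 = m
      · refine not_adj_end h hk hV hn hkn hkm hmax _ hf.rev u (fun j hj => hu _ (by omega)) ?_
        have : m - 1 - 0 = i := by omega
        simp only [this]
        exact hadj.symm
      · have e := no_three h hk hV (f i) (f (i - 1)) (f (i + 1)) u
          ((hf _ (by omega) _ (by omega)).2.2 (by omega))
          ((hf _ (by omega) _ (by omega)).2.2 (by omega)) hadj
          (fun e => by have := (hf _ (by omega) _ (by omega)).1 e; omega)
          (hu _ (by omega))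
        exact hu _ (by omega) e
  -- count
  have hle : cntP G k ≤ cntP (pathGraph m) k := by
    unfold cntP
    let R : Finset V := Finset.univ.map hf.emb.toEmbedding
    have hR : R.card = m := by simp [R]
    have hsub : ∀ S : Finset V, S.card = k → Nonempty (G.induce (↑S : Set V) ≃g pathGraph k) →
        ∃ T : Finset (Fin m), T.map hf.emb.toEmbedding = S := by
      rintro S hS ⟨e⟩
      have hSR : S ⊆ R := by
        have hne : ∃ x ∈ S, x ∈ R := by
          by_contra! hc
          have hd : Disjoint S R := Finset.disjoint_left.2 hc
          have := Finset.card_union_of_disjoint hd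
          have h2 := Finset.card_le_univ (S ∪ R)
          omega
        obtain ⟨x, hxS, hxR⟩ := hne
        have := closed_of_iso e (↑R : Set V) (by
          intro a _ b _ hab ha
          rw [Finset.mem_coe, IndPath.mem_map] at ha ⊢
          obtain ⟨i, hi, rfl⟩ := ha
          exact hclosed i hi b hab) x hxS hxR
        exact Finset.coe_subset.1 this
      obtain ⟨T, _, hT⟩ := Finset.subset_map_iff.1 hSR
      exact ⟨T, hT.symm⟩
    have himg : {s : Finset V | s.card = k ∧ Nonempty ((G.induce (↑s : Set V)) ≃g pathGraph k)} ⊆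
        (fun T : Finset (Fin m) => T.map hf.emb.toEmbedding) '' {s : Finset (Fin m) | s.card = k ∧
          Nonempty (((pathGraph m).induce (↑s : Set (Fin m))) ≃g pathGraph k)} := by
      rintro S ⟨hS, ⟨e⟩⟩
      obtain ⟨T, rfl⟩ := hsub S hS ⟨e⟩
      obtain ⟨g⟩ := iso_of_emb hf.emb T
      exact ⟨T, ⟨by simpa using hS, ⟨g.symm.trans e⟩⟩, rfl⟩
    exact (Set.ncard_le_ncard himg (Set.toFinite _)).trans (Set.ncard_image_le (Set.toFinite _))
  rw [hcnt, cntP_path (by omega) hkm] at hle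
  have hmV := hbd _ _ hf
  obtain rfl : m = n := by omega
  have hbij : Function.Bijective hf.emb := by
    rw [Fintype.bijective_iff_injective_and_card]
    exact ⟨hf.emb.injective, by rw [Fintype.card_fin]; omega⟩
  exact ⟨RelIso.symm (RelIso.ofSurjective hf.emb hbij.2)⟩

/-- For `n ≥ 6`: (a) every graph with the same `(⌊n/2⌋+1)`-deck as `P_n` is
isomorphic to `P_n`; (b) some graph not isomorphic to `P_n` has the same `⌊n/2⌋`-deck as
`P_n`; hence `ρ(P_n) = ⌊n/2⌋ + 1`. -/
theorem stmt_6 (n : ℕ) (hn : 6 ≤ n) :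
    (∀ (W : Type) [Fintype W] (H : SimpleGraph W),
      SameDeck H (pathGraph n) (n / 2 + 1) → Nonempty (H ≃g pathGraph n)) ∧
    (∃ (W : Type) (_ : Fintype W) (H : SimpleGraph W),
      ¬ Nonempty (H ≃g pathGraph n) ∧ SameDeck H (pathGraph n) (n / 2)) ∧
    IsLeast {k : ℕ | ∀ (W : Type) [Fintype W] (H : SimpleGraph W),
      SameDeck H (pathGraph n) k → Nonempty (H ≃g pathGraph n)} (n / 2 + 1) := by
  have hA : ∀ (W : Type) [Fintype W] (H : SimpleGraph W),
      SameDeck H (pathGraph n) (n / 2 + 1) → Nonempty (H ≃g pathGraph n) :=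
    fun W _ H h => part_a h (by omega) (by omega) (by omega)
  refine ⟨hA, ⟨Fin n, inferInstance, altG n (n / 2), altG_not_iso (by omega) (by omega),
    altG_sameDeck (by omega) (by omega) le_rfl⟩, hA, ?_⟩
  intro k hk
  by_contra! hlt
  exact altG_not_iso (n := n) (K := n / 2) (by omega) (by omega)
    (hk (Fin n) (altG n (n / 2)) (altG_sameDeck (by omega) (by omega) (by omega)))
end

section
/- For every natural number n ≥ 6: (a) every finite simple graph having the same ⌊n/2⌋-deck as the cycle C_n is isomorphic to C_n; and (b) there exists a finite simple graph not isomorphic to C_n having the same (⌊n/2⌋−1)-deck as C_n. Hence ρ(C_n) = ⌊n/2⌋. -/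
open SimpleGraph

namespace S7

/-- cycle adjacency on naturals -/
def cadj (n x y : ℕ) : Prop := x + 1 = y ∨ y + 1 = x ∨ (x = 0 ∧ y + 1 = n) ∨ (y = 0 ∧ x + 1 = n)

lemma cyc_adj {n : ℕ} (hn : 3 ≤ n) (x y : Fin n) : (cycleGraph n).Adj x y ↔ cadj n x y := by
  rw [cycleGraph_adj']
  unfold cadj
  have hx := x.2
  have hy := y.2
  rw [Fin.val_sub, Fin.val_sub]
  rcases Nat.lt_or_ge x.1 y.1 with h | h
  · rw [Nat.mod_eq_of_lt (by omega : n - y.1 + x.1 < n),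
      (by omega : n - x.1 + y.1 = (y.1 - x.1) + n), Nat.add_mod_right,
      Nat.mod_eq_of_lt (by omega : y.1 - x.1 < n)]
    omega
  · rcases h.eq_or_lt with h | h
    · have h1 : n - x.1 + x.1 = n := by omega
      rw [h, h1]; simp; omega
    · rw [Nat.mod_eq_of_lt (by omega : n - x.1 + y.1 < n),
        (by omega : n - y.1 + x.1 = (x.1 - y.1) + n), Nat.add_mod_right,
        Nat.mod_eq_of_lt (by omega : x.1 - y.1 < n)]
      omega

lemma cyc_closed {n : ℕ} (hn : 3 ≤ n) (T : Set (Fin n)) (hT : T.Nonempty)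
    (hc : ∀ x ∈ T, ∀ y, (cycleGraph n).Adj x y → y ∈ T) : T = Set.univ := by
  obtain ⟨x, hx⟩ := hT
  have h0 : ∀ a : ℕ, ∀ h : a < n, (⟨a, h⟩ : Fin n) ∈ T → (⟨0, by omega⟩ : Fin n) ∈ T := by
    intro a
    induction a with
    | zero => intro h h'; exact h'
    | succ a ih =>
      intro h h'
      exact ih (by omega) (hc _ h' _ ((cyc_adj hn _ _).2 (by simp [cadj])))
  have h1 : ∀ a : ℕ, ∀ h : a < n, (⟨a, h⟩ : Fin n) ∈ T := by
    intro a
    induction a with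
    | zero => intro h; exact h0 x.1 x.2 hx
    | succ a ih =>
      intro h
      exact hc _ (ih (by omega)) _ ((cyc_adj hn _ _).2 (by simp [cadj]))
  ext y
  simpa using h1 y.1 y.2

/-- two cycles adjacency -/
def tadj (n m x y : ℕ) : Prop :=
  (x + 1 = y ∧ y ≠ m) ∨ (y + 1 = x ∧ x ≠ m) ∨ (x = 0 ∧ y + 1 = m) ∨ (y = 0 ∧ x + 1 = m) ∨
  (x = m ∧ y + 1 = n) ∨ (y = m ∧ x + 1 = n)

/-- disjoint union of two cycles -/
def tg (n m : ℕ) (h : 2 ≤ m ∧ 2 * m ≤ n) : SimpleGraph (Fin n) where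
  Adj x y := tadj n m x y
  symm := ⟨fun x y h => by unfold tadj at *; omega⟩
  loopless := ⟨fun x hx => by unfold tadj at *; omega⟩

/-- swap of prefixes -/
def sw (m i x : ℕ) : ℕ := if x < i then x + m else if m ≤ x ∧ x < m + i then x - m else x

lemma sw_adj (n m i x y : ℕ) (hm : 3 ≤ m) (hn : 2 * m ≤ n) (hi : i < m) (hx : x < n) (hy : y < n)
    (h1 : x ≠ i) (h2 : x ≠ m + i) (h3 : y ≠ i) (h4 : y ≠ m + i) :
    cadj n x y ↔ tadj n m (sw m i x) (sw m i y) := by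
  unfold cadj tadj sw
  split_ifs <;> omega

/-- swap as a perm -/
def swp (n m i : ℕ) (hn : 2 * m ≤ n) (hi : i ≤ m) : Equiv.Perm (Fin n) where
  toFun x := ⟨sw m i x, by have := x.2; unfold sw; split_ifs <;> omega⟩
  invFun x := ⟨sw m i x, by have := x.2; unfold sw; split_ifs <;> omega⟩
  left_inv x := by ext; have := x.2; simp only [sw]; split_ifs <;> omega
  right_inv x := by ext; have := x.2; simp only [sw]; split_ifs <;> omega

lemma swp_swp (n m i : ℕ) (hn : 2 * m ≤ n) (hi : i ≤ m) (x : Fin n) :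
  swp n m i hn hi (swp n m i hn hi x) = x := (swp n m i hn hi).left_inv x

/-- a free index -/
def free (n m : ℕ) (S : Finset (Fin n)) (i : ℕ) : Prop := ∀ x ∈ S, x.1 ≠ i ∧ x.1 ≠ m + i

lemma exists_free (n m : ℕ) (hn : 2 * m ≤ n) (S : Finset (Fin n)) (hS : S.card < m) :
    ∃ i < m, free n m S i := by
  classical
  have : ((S.image (fun x => if x.1 < m then x.1 else x.1 - m))).card < (Finset.range m).card := by
    rw [Finset.card_range]
    exact lt_of_le_of_lt Finset.card_image_le hS
  obtain ⟨i, hi, hi'⟩ := Finset.exists_mem_notMem_of_card_lt_card this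
  refine ⟨i, Finset.mem_range.1 hi, ?_⟩
  intro x hx
  rw [Finset.mem_range] at hi
  have : (if x.1 < m then x.1 else x.1 - m) ≠ i := fun h => hi' (Finset.mem_image.2 ⟨x, hx, h⟩)
  split_ifs at this <;> omega

/-- the canonical index -/
noncomputable def ix (n m : ℕ) (S : Finset (Fin n)) : ℕ := sInf {i | i < m ∧ free n m S i}

lemma ix_le (n m : ℕ) (S : Finset (Fin n)) : ix n m S ≤ m := by
  unfold ix
  rcases Set.eq_empty_or_nonempty {i | i < m ∧ free n m S i} with h | h
  · rw [h]; simp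
  · exact (Nat.sInf_mem h).1.le

lemma ix_congr (n m : ℕ) (S T : Finset (Fin n)) (h : ∀ i < m, free n m S i ↔ free n m T i) :
    ix n m S = ix n m T := by
  unfold ix
  congr 1
  ext i
  constructor <;> rintro ⟨a, b⟩ <;> refine ⟨a, ?_⟩
  · exact (h i a).1 b
  · exact (h i a).2 b

lemma ix_spec (n m : ℕ) (hn : 2 * m ≤ n) (S : Finset (Fin n)) (hS : S.card < m) :
    ix n m S < m ∧ free n m S (ix n m S) :=
  Nat.sInf_mem (s := {i | i < m ∧ free n m S i}) (exists_free n m hn S hS)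

/-- the involution on subsets -/
noncomputable def Phi (n m : ℕ) (hn : 2 * m ≤ n) (S : Finset (Fin n)) : Finset (Fin n) :=
  S.map (swp n m (ix n m S) hn (ix_le n m S)).toEmbedding

lemma free_map (n m i j : ℕ) (hn : 2 * m ≤ n) (hi : i ≤ m) (hj : j < m) (S : Finset (Fin n)) :
    free n m S j ↔ free n m (S.map (swp n m i hn hi).toEmbedding) j := by
  unfold free
  rw [Finset.forall_mem_map]
  simp only [Equiv.coe_toEmbedding]
  refine forall₂_congr fun x hx => ?_
  have := x.2
  simp only [swp, sw, Equiv.coe_fn_mk]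
  split_ifs <;> omega

lemma Phi_Phi (n m : ℕ) (hn : 2 * m ≤ n) (S : Finset (Fin n)) :
    Phi n m hn (Phi n m hn S) = S := by
  have h : ix n m (Phi n m hn S) = ix n m S := by
    symm
    exact ix_congr _ _ _ _ fun i hi => free_map _ _ _ _ _ _ hi _
  have e : ∀ j (hj : j ≤ m), j = ix n m S →
      (Phi n m hn S).map (swp n m j hn hj).toEmbedding = S := by
    rintro j hj rfl
    ext x
    simp only [Phi, Finset.mem_map_equiv]
    have : (swp n m (ix n m S) hn hj).symm = swp n m (ix n m S) hn hj := rfl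
    rw [this, swp_swp]
  exact e _ _ h

lemma Phi_iso (n m : ℕ) (hm : 3 ≤ m) (hn : 2 * m ≤ n) (S : Finset (Fin n)) (hS : S.card < m) :
    Nonempty ((cycleGraph n).induce (S : Set (Fin n)) ≃g
      (tg n m ⟨by omega, hn⟩).induce (Phi n m hn S : Set (Fin n))) := by
  obtain ⟨h1, h2⟩ := ix_spec n m hn S hS
  refine ⟨⟨(swp n m (ix n m S) hn (ix_le n m S)).subtypeEquiv ?_, ?_⟩⟩
  · intro a
    simp [Phi]
  · rintro ⟨a, ha⟩ ⟨b, hb⟩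
    simp only [comap_adj, Equiv.subtypeEquiv_apply, Function.Embedding.subtype_apply]
    rw [cyc_adj (by omega)]
    exact (sw_adj n m _ a b hm hn h1 a.2 b.2 (h2 a ha).1 (h2 a ha).2 (h2 b hb).1 (h2 b hb).2).symm

lemma tg_deck (n m k : ℕ) (hm : 3 ≤ m) (hn : 2 * m ≤ n) (hk : k < m) :
    SameDeck (tg n m ⟨by omega, hn⟩) (cycleGraph n) k := by
  intro H
  symm
  refine Set.ncard_congr (fun S _ => Phi n m hn S) ?_ ?_ ?_
  · rintro S ⟨hS, ⟨e⟩⟩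
    obtain ⟨f⟩ := Phi_iso n m hm hn S (by omega)
    exact ⟨by simp [Phi, hS], ⟨f.symm.trans e⟩⟩
  · intro S T _ _ h
    rw [← Phi_Phi n m hn S, h, Phi_Phi]
  · rintro S ⟨hS, ⟨e⟩⟩
    have hc : (Phi n m hn S).card = k := by simp [Phi, hS]
    obtain ⟨f⟩ := Phi_iso n m hm hn (Phi n m hn S) (by omega)
    rw [Phi_Phi] at f
    exact ⟨Phi n m hn S, ⟨hc, ⟨f.trans e⟩⟩, Phi_Phi n m hn S⟩

lemma tg_not_iso (n m : ℕ) (hm : 3 ≤ m) (hn : 2 * m ≤ n) :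
    ¬ Nonempty (tg n m ⟨by omega, hn⟩ ≃g cycleGraph n) := by
  rintro ⟨e⟩
  have := cyc_closed (n := n) (by omega) {x | (e.symm x).1 < m}
    ⟨e ⟨0, by omega⟩, by simp; omega⟩ (by
      intro x hx y hxy
      have h : (tg n m ⟨by omega, hn⟩).Adj (e.symm x) (e.symm y) := by
        rw [e.symm.map_adj_iff]; exact hxy
      simp only [Set.mem_ofPred_eq] at hx ⊢
      have h : tadj n m (e.symm x) (e.symm y) := h
      unfold tadj at h
      omega)
  have h2 : e ⟨m, by omega⟩ ∈ {x | (e.symm x).1 < m} := by rw [this]; trivial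
  simp at h2

lemma exists_rep {V : Type*} (G : SimpleGraph V) {k : ℕ} (S : {S : Finset V // S.card = k}) :
    ∃ A : SimpleGraph (Fin k), Nonempty (G.induce (S.1 : Set V) ≃g A) := by
  have e : (S.1 : Set V) ≃ Fin k := S.1.equivFinOfCardEq S.2
  exact ⟨_, ⟨Iso.map e _⟩⟩

/-- isomorphism setoid -/
def isoSetoid (k : ℕ) : Setoid (SimpleGraph (Fin k)) where
  r A B := Nonempty (A ≃g B)
  iseqv := ⟨fun A => ⟨Iso.refl⟩, fun ⟨e⟩ => ⟨e.symm⟩, fun ⟨e⟩ ⟨f⟩ => ⟨e.trans f⟩⟩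

/-- isomorphism class of an induced subgraph -/
noncomputable def cls {V : Type*} (G : SimpleGraph V) {k : ℕ} (S : {S : Finset V // S.card = k}) :
    Quotient (isoSetoid k) := Quotient.mk (isoSetoid k) (exists_rep G S).choose

lemma cls_iff {V : Type*} (G : SimpleGraph V) {k : ℕ} (S : {S : Finset V // S.card = k})
    (H : SimpleGraph (Fin k)) :
    cls G S = Quotient.mk (isoSetoid k) H ↔ Nonempty (G.induce (S.1 : Set V) ≃g H) := by
  obtain ⟨e⟩ := (exists_rep G S).choose_spec
  unfold cls
  rw [Quotient.eq]
  constructor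
  · rintro ⟨f⟩; exact ⟨e.trans f⟩
  · rintro ⟨f⟩; exact ⟨e.symm.trans f⟩

lemma card_fiber {V : Type*} [Fintype V] (G : SimpleGraph V) {k : ℕ} (H : SimpleGraph (Fin k)) :
    Nat.card {S : {S : Finset V // S.card = k} // cls G S = Quotient.mk (isoSetoid k) H} =
    Set.ncard {s : Finset V | s.card = k ∧ Nonempty ((G.induce (↑s : Set V)) ≃g H)} := by
  rw [← Nat.card_coe_set_eq]
  refine Nat.card_congr ((Equiv.subtypeEquivRight (fun S => cls_iff G S H)).trans ?_)
  exact Equiv.subtypeSubtypeEquivSubtypeInter (fun S : Finset V => S.card = k)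
    (fun S => Nonempty ((G.induce (↑S : Set V)) ≃g H))

lemma deck_equiv {V W : Type*} [Fintype V] [Fintype W] {G : SimpleGraph V} {G' : SimpleGraph W}
    {k : ℕ} (h : SameDeck G G' k) :
    ∃ φ : {S : Finset V // S.card = k} ≃ {S : Finset W // S.card = k},
      ∀ S, Nonempty (G.induce (S.1 : Set V) ≃g G'.induce ((φ S).1 : Set W)) := by
  have h1 : ∀ c, Nonempty ({S // cls G (k := k) S = c} ≃ {S // cls G' (k := k) S = c}) := by
    intro c
    induction c using Quotient.inductionOn with
    | h H =>
      refine (Finite.card_eq (α := {S // cls G (k := k) S = _}) (β := {S // cls G' (k := k) S = _})).1 ?_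
      rw [card_fiber, card_fiber]
      exact h H
  have e := fun c => (h1 c).some
  refine ⟨Equiv.ofFiberEquiv e, fun S => ?_⟩
  have h2 := Equiv.ofFiberEquiv_map e S
  obtain ⟨A, hA⟩ := Quotient.exists_rep (cls G S)
  obtain ⟨f⟩ := (cls_iff G S A).1 hA.symm
  obtain ⟨g⟩ := (cls_iff G' _ A).1 (h2.trans hA.symm)
  exact ⟨f.trans g.symm⟩

/-- injective maps preserving a relation -/
def X {α V : Type*} (R : α → α → Prop) (G : SimpleGraph V) : Type _ :=
  {x : α → V // Function.Injective x ∧ ∀ a b, R a b → G.Adj (x a) (x b)}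

instance {α V : Type*} (R : α → α → Prop) (G : SimpleGraph V) [Finite α] [Finite V] :
    Finite (X R G) := by unfold X; infer_instance

/-- transport along isomorphism -/
def XIso {α V W : Type*} (R : α → α → Prop) {G : SimpleGraph V} {G' : SimpleGraph W}
    (e : G ≃g G') : X R G ≃ X R G' where
  toFun x := ⟨fun a => e (x.1 a), e.injective.comp x.2.1,
    fun a b h => e.map_adj_iff.2 (x.2.2 a b h)⟩
  invFun x := ⟨fun a => e.symm (x.1 a), e.symm.injective.comp x.2.1,
    fun a b h => e.symm.map_adj_iff.2 (x.2.2 a b h)⟩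
  left_inv x := by apply Subtype.ext; funext a; simp
  right_inv x := by apply Subtype.ext; funext a; simp

/-- double counting -/
def XSig {α V : Type*} (R : α → α → Prop) (G : SimpleGraph V) (k : ℕ) :
    (Σ S : {S : Finset V // S.card = k}, X R (G.induce (S.1 : Set V))) ≃
    (Σ x : X R G, {S : {S : Finset V // S.card = k} // ∀ a, x.1 a ∈ S.1}) where
  toFun p := ⟨⟨fun a => (p.2.1 a).1, fun a b h => p.2.2.1 (Subtype.ext h),
    fun a b h => p.2.2.2 a b h⟩, ⟨p.1, fun a => (p.2.1 a).2⟩⟩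
  invFun p := ⟨p.2.1, ⟨fun a => ⟨p.1.1 a, p.2.2 a⟩,
    fun a b h => p.1.2.1 (congrArg Subtype.val h), fun a b h => p.1.2.2 a b h⟩⟩
  left_inv p := rfl
  right_inv p := rfl

lemma card_super {α V : Type*} [Fintype α] [Fintype V] (k : ℕ) (hk : Fintype.card α ≤ k)
    (x : α → V) (hx : Function.Injective x) :
    Nat.card {S : {S : Finset V // S.card = k} // ∀ a, x a ∈ S.1} =
      (Fintype.card V - Fintype.card α).choose (k - Fintype.card α) := by
  classical
  have hc : (Finset.univ.image x).card = Fintype.card α := by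
    rw [Finset.card_image_of_injective _ hx, Finset.card_univ]
  have := Finset.card_filter_powersetCard_subset (Finset.univ.image x) (Finset.univ : Finset V) k
    (Finset.subset_univ _) (by omega)
  rw [hc, Finset.card_univ] at this
  rw [← this, Nat.card_congr (Equiv.subtypeSubtypeEquivSubtypeInter
    (fun S : Finset V => S.card = k) (fun S => ∀ a, x a ∈ S)), ← Nat.card_eq_finsetCard]
  refine Nat.card_congr (Equiv.subtypeEquivRight fun S => ?_)
  simp [Finset.mem_powersetCard, Finset.image_subset_iff]

lemma sum_X {α V : Type*} [Fintype α] [Fintype V] (R : α → α → Prop) (G : SimpleGraph V)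
    (k : ℕ) (hk : Fintype.card α ≤ k) :
    Nat.card (Σ S : {S : Finset V // S.card = k}, X R (G.induce (S.1 : Set V))) =
      Nat.card (X R G) * (Fintype.card V - Fintype.card α).choose (k - Fintype.card α) := by
  classical
  have := Fintype.ofFinite (X R G)
  rw [Nat.card_congr (XSig R G k), Nat.card_sigma,
    Finset.sum_congr rfl (fun x _ => card_super k hk x.1 x.2.1)]
  simp

lemma kelly {α V W : Type*} [Fintype α] [Fintype V] [Fintype W] (R : α → α → Prop)
    {G : SimpleGraph V} {G' : SimpleGraph W}
    {k : ℕ} (h : SameDeck G G' k) (hk : Fintype.card α ≤ k) (hkn : k ≤ Fintype.card V)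
    (hc : Fintype.card V = Fintype.card W) : Nat.card (X R G) = Nat.card (X R G') := by
  obtain ⟨φ, hφ⟩ := deck_equiv h
  have e := Nat.card_congr (Equiv.sigmaCongr (β₁ := fun S => X R (G.induce (S.1 : Set V)))
    (β₂ := fun S => X R (G'.induce (S.1 : Set W))) φ (fun S => XIso R (hφ S).some))
  rw [sum_X R G k hk, sum_X R G' k hk, ← hc] at e
  exact Nat.eq_of_mul_eq_mul_right (Nat.choose_pos (by omega)) e

/-- star relation -/
def star (j : ℕ) : Option (Fin j) → Option (Fin j) → Prop := fun a b => a = none ∧ b ≠ none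

/-- star copies -/
def XStar {V : Type*} (j : ℕ) (G : SimpleGraph V) :
    X (star j) G ≃ Σ v, (Fin j ↪ G.neighborSet v) where
  toFun x := ⟨x.1 none, ⟨fun a => ⟨x.1 (some a), x.2.2 none (some a) ⟨rfl, by simp⟩⟩,
    fun a b h => Option.some_injective _ (x.2.1 (congrArg Subtype.val h))⟩⟩
  invFun p := ⟨fun a => a.elim p.1 (fun a => (p.2 a).1), by
    constructor
    · rintro (_ | a) (_ | b) h
      · rfl
      · exact absurd h (G.ne_of_adj (p.2 b).2)
      · exact absurd h.symm (G.ne_of_adj (p.2 a).2)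
      · exact congrArg some (p.2.injective (Subtype.ext h))
    · rintro a (_ | b) ⟨rfl, h⟩
      · simp at h
      · exact (p.2 b).2⟩
  left_inv x := by
    apply Subtype.ext
    funext a
    cases a <;> rfl
  right_inv p := rfl

lemma card_XStar {V : Type*} [Fintype V] (j : ℕ) (G : SimpleGraph V) :
    Nat.card (X (star j) G) = ∑ v, (G.neighborSet v).ncard.descFactorial j := by
  classical
  rw [Nat.card_congr (XStar j G), Nat.card_sigma]
  refine Finset.sum_congr rfl fun v _ => ?_
  rw [Nat.card_eq_fintype_card, Fintype.card_embedding_eq, ← Nat.card_coe_set_eq,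
    Nat.card_eq_fintype_card, Fintype.card_fin]

lemma cyc_two {n : ℕ} (hn : 3 ≤ n) (v : Fin n) : ((cycleGraph n).neighborSet v).ncard = 2 := by
  obtain ⟨m, rfl⟩ := Nat.exists_eq_add_of_le' hn
  have := cycleGraph_degree_three_le (v := v)
  rw [← this, Set.ncard_eq_toFinset_card']
  rfl

lemma deck_card {V W : Type*} [Fintype V] [Fintype W] {G : SimpleGraph V} {G' : SimpleGraph W}
    {k : ℕ} (h : SameDeck G G' k) (hk : 1 ≤ k) (hkn : k ≤ Fintype.card W) :
    Fintype.card V = Fintype.card W := by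
  obtain ⟨φ, -⟩ := deck_equiv h
  have e := Fintype.card_congr φ
  rw [Fintype.card_finset_len, Fintype.card_finset_len] at e
  have key : ∀ a b : ℕ, a < b → k ≤ b → a.choose k ≠ b.choose k := by
    intro a b hab hkb
    obtain ⟨b, rfl⟩ : ∃ c, b = c + 1 := ⟨b - 1, by omega⟩
    obtain ⟨k, rfl⟩ : ∃ c, k = c + 1 := ⟨k - 1, by omega⟩
    have h1 : a.choose (k+1) ≤ b.choose (k+1) := Nat.choose_le_choose _ (by omega)
    have h2 : 0 < b.choose k := Nat.choose_pos (by omega)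
    rw [Nat.choose_succ_succ']
    omega
  rcases lt_trichotomy (Fintype.card V) (Fintype.card W) with h1 | h1 | h1
  · exact absurd e (key _ _ h1 hkn)
  · exact h1
  · exact absurd e.symm (key _ _ h1 (by omega))

lemma deck_two {W : Type*} [Fintype W] {n k : ℕ} (H : SimpleGraph W) (hn : 3 ≤ n) (hk : 3 ≤ k)
    (hkn : k ≤ n) (h : SameDeck H (cycleGraph n) k) (v : W) : (H.neighborSet v).ncard = 2 := by
  have hc : Fintype.card W = n := by simpa using deck_card h (by omega) (by simpa using hkn)
  have h1 := kelly (star 1) h (by simp; omega) (by omega) (by simpa using hc)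
  have h2 := kelly (star 2) h (by simp; omega) (by omega) (by simpa using hc)
  rw [card_XStar, card_XStar] at h1 h2
  simp only [cyc_two hn] at h1 h2
  simp [Nat.descFactorial] at h1 h2
  have h3 : ∑ v, (((H.neighborSet v).ncard : ℤ) - 2) ^ 2 = 0 := by
    have e : ∀ v, (((H.neighborSet v).ncard : ℤ) - 2) ^ 2 =
      (((H.neighborSet v).ncard - 1) * (H.neighborSet v).ncard : ℕ) -
        3 * ((H.neighborSet v).ncard : ℕ) + 4 := by
      intro v
      rcases (H.neighborSet v).ncard with _ | d
      · simp
      · simp only [Nat.add_sub_cancel]; push_cast; ring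
    simp_rw [e, Finset.sum_add_distrib, Finset.sum_sub_distrib, ← Finset.mul_sum]
    rw [← Nat.cast_sum, ← Nat.cast_sum, h1, h2]
    simp [hc]; ring
  rw [Finset.sum_eq_zero_iff_of_nonneg (fun _ _ => sq_nonneg _)] at h3
  have := h3 v (Finset.mem_univ _)
  rw [sq_eq_zero_iff] at this
  omega

lemma deck_closed {W : Type*} [Fintype W] {n k : ℕ} (H : SimpleGraph W) (hn : 3 ≤ n) (hk : 3 ≤ k)
    (hkn : k < n) (hkn' : n ≤ 2 * k + 1) (h : SameDeck H (cycleGraph n) k) (T : Set W)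
    (hT : T.Nonempty) (hc : ∀ x ∈ T, ∀ y, H.Adj x y → y ∈ T) : T = Set.univ := by
  classical
  have hcard : Fintype.card W = n := by
    simpa using deck_card h (by omega) (by simpa using hkn.le)
  have key : ∀ T : Set W, T.Nonempty → (∀ x ∈ T, ∀ y, H.Adj x y → y ∈ T) → ¬ T.ncard ≤ k := by
    intro T hT hc hTk
    obtain ⟨S, hTS, -, hS⟩ := Finset.exists_subsuperset_card_eq (Finset.subset_univ T.toFinset)
      (n := k) (by rw [← Set.ncard_eq_toFinset_card']; exact hTk)
      (by rw [Finset.card_univ]; omega)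
    obtain ⟨φ, hφ⟩ := deck_equiv h
    obtain ⟨e⟩ := hφ ⟨S, hS⟩
    have hmem : ∀ t ∈ T, t ∈ (S : Set W) := fun t ht => hTS (by simpa using ht)
    let f : T → Fin n := fun t => (e ⟨t.1, hmem t.1 t.2⟩).1
    have hf : Function.Injective f := by
      intro a b hab
      have := e.injective (Subtype.ext hab)
      simpa [Subtype.ext_iff] using this
    have hfa : ∀ a b : T, H.Adj a.1 b.1 → (cycleGraph n).Adj (f a) (f b) := by
      intro a b hab
      exact (e.map_adj_iff (v := ⟨a.1, hmem a.1 a.2⟩) (w := ⟨b.1, hmem b.1 b.2⟩)).2 hab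
    have hu := cyc_closed hn (Set.range f) (by
      obtain ⟨t, ht⟩ := hT
      exact ⟨f ⟨t, ht⟩, ⟨t, ht⟩, rfl⟩) (by
      rintro _ ⟨t, rfl⟩ y hy
      obtain ⟨a, b, hab, hN⟩ := Set.ncard_eq_two.1 (deck_two H hn hk hkn.le h t.1)
      have ha : H.Adj t.1 a := by
        have : a ∈ H.neighborSet t.1 := by rw [hN]; simp
        exact this
      have hb : H.Adj t.1 b := by
        have : b ∈ H.neighborSet t.1 := by rw [hN]; simp
        exact this
      have haT := hc _ t.2 _ ha
      have hbT := hc _ t.2 _ hb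
      obtain ⟨c, d, hcd, hM⟩ := Set.ncard_eq_two.1 (cyc_two hn (f t))
      have h1 : f ⟨a, haT⟩ ∈ (cycleGraph n).neighborSet (f t) := hfa t ⟨a, haT⟩ ha
      have h2 : f ⟨b, hbT⟩ ∈ (cycleGraph n).neighborSet (f t) := hfa t ⟨b, hbT⟩ hb
      have h3 : y ∈ (cycleGraph n).neighborSet (f t) := hy
      have h4 : f ⟨a, haT⟩ ≠ f ⟨b, hbT⟩ := fun h => hab (congrArg Subtype.val (hf h))
      rw [hM] at h1 h2 h3
      simp only [Set.mem_insert_iff, Set.mem_singleton_iff] at h1 h2 h3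
      have : y = f ⟨a, haT⟩ ∨ y = f ⟨b, hbT⟩ := by grind
      rcases this with h | h
      · exact ⟨_, h.symm⟩
      · exact ⟨_, h.symm⟩)
    have h5 : (Set.range f).ncard = n := by rw [hu, Set.ncard_univ]; simp
    have h6 : (Set.range f).ncard = T.ncard := by
      rw [← Nat.card_coe_set_eq, ← Nat.card_coe_set_eq]
      exact (Nat.card_congr (Equiv.ofInjective f hf)).symm
    omega
  by_contra hne
  have h1 := key T hT hc
  have h2 := key Tᶜ (Set.nonempty_compl.2 hne) (fun x hx y hy hyT => hx (hc y hyT x hy.symm))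
  have h3 := Set.ncard_add_ncard_compl T
  rw [Nat.card_eq_fintype_card, hcard] at h3
  omega

lemma iso_of_two {W : Type*} [Fintype W] {n : ℕ} (H : SimpleGraph W)
    (hcard : Fintype.card W = n) (hn : 3 ≤ n) (h2 : ∀ v, (H.neighborSet v).ncard = 2)
    (hcl : ∀ T : Set W, T.Nonempty → (∀ x ∈ T, ∀ y, H.Adj x y → y ∈ T) → T = Set.univ) :
    Nonempty (H ≃g cycleGraph n) := by
  have hex : ∀ u v, ∃ w, H.Adj u v → (w ≠ u ∧ ∀ z, H.Adj v z ↔ z = u ∨ z = w) := by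
    intro u v
    by_cases h : H.Adj u v
    · obtain ⟨a, b, hab, hN⟩ := Set.ncard_eq_two.1 (h2 v)
      have hz : ∀ z, H.Adj v z ↔ z = a ∨ z = b := by
        intro z
        have : z ∈ H.neighborSet v ↔ z ∈ ({a, b} : Set W) := by rw [hN]
        simpa using this
      rcases (hz u).1 h.symm with rfl | rfl
      · exact ⟨b, fun _ => ⟨hab.symm, hz⟩⟩
      · exact ⟨a, fun _ => ⟨hab, fun z => by rw [hz, or_comm]⟩⟩
    · exact ⟨u, fun h' => absurd h' h⟩
  choose nx hnx using hex
  have hne : Nonempty W := Fintype.card_pos_iff.1 (by omega)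
  obtain ⟨v0⟩ := hne
  obtain ⟨v1, b, -, hN⟩ := Set.ncard_eq_two.1 (h2 v0)
  have h01 : H.Adj v0 v1 := by
    have : v1 ∈ H.neighborSet v0 := by rw [hN]; simp
    exact this
  let s : ℕ → W × W := fun i => (fun p : W × W => (p.2, nx p.1 p.2))^[i] (v0, v1)
  have hs : ∀ i, s (i + 1) = ((s i).2, nx (s i).1 (s i).2) := fun i => by
    simp only [s, Function.iterate_succ_apply']
  obtain ⟨x, hx⟩ : ∃ x : ℕ → W, x = fun i => (s i).1 := ⟨_, rfl⟩
  have hx1 : ∀ i, x (i + 1) = (s i).2 := fun i => by rw [hx]; simp only [hs]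
  have hx2 : ∀ i, x (i + 2) = nx (x i) (x (i + 1)) := fun i => by
    rw [hx1 (i + 1), hs, hx1 i, hx]
  have hadj : ∀ i, H.Adj (x i) (x (i + 1)) := by
    intro i
    induction i with
    | zero => rw [hx1, hx]; exact h01
    | succ i ih =>
      rw [hx2]
      exact ((hnx _ _ ih).2 _).2 (Or.inr rfl)
  have hnb : ∀ i z, H.Adj (x (i + 1)) z ↔ z = x i ∨ z = x (i + 2) := by
    intro i z
    rw [hx2]; exact (hnx _ _ (hadj i)).2 z
  have hd : ∀ i, x (i + 2) ≠ x i := by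
    intro i
    rw [hx2]; exact (hnx _ _ (hadj i)).1
  clear_value s
  clear hx1 hx2 hx hs s hnx
  classical
  have hrep : ∃ j, ∃ i < j, x i = x j := by
    obtain ⟨a, b, hab, h⟩ := Finite.exists_ne_map_eq_of_infinite x
    rcases lt_or_gt_of_ne hab with h' | h'
    · exact ⟨b, a, h', h⟩
    · exact ⟨a, b, h', h.symm⟩
  obtain ⟨j, ⟨i, hij, hxi⟩, hmin⟩ : ∃ j, (∃ i < j, x i = x j) ∧
      ∀ b < j, ∀ a < b, x a ≠ x b :=
    ⟨Nat.find hrep, Nat.find_spec hrep, fun b hb a hab h => Nat.find_min hrep hb ⟨a, hab, h⟩⟩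
  have hinj : ∀ a < j, ∀ b < j, x a = x b → a = b := by
    intro a ha b hb h
    rcases lt_trichotomy a b with h' | h' | h'
    · exact absurd h (hmin b hb a h')
    · exact h'
    · exact absurd h.symm (hmin a ha b h')
  obtain ⟨j', rfl⟩ : ∃ j', j = j' + 1 := ⟨j - 1, by omega⟩
  have hji : H.Adj (x i) (x j') := by rw [hxi]; exact (hadj j').symm
  have hij' : i ≠ j' := by rintro rfl; exact H.loopless.irrefl _ hji
  have hi0 : i = 0 := by
    rcases i with _ | i
    · rfl
    · exfalso
      rcases (hnb i _).1 hji with h | h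
      · have := hinj _ (by omega) _ (by omega) h
        omega
      · have := hinj _ (by omega) _ (by omega) h
        subst this
        exact hd (i + 1) hxi.symm
  subst hi0
  have hj2 : 2 ≤ j' := by
    by_contra hlt
    have : j' = 1 := by omega
    subst this
    exact hd 0 hxi.symm
  have hx1 : x (j' + 2) = x 1 := by
    have h := hadj 0
    rw [hxi, hnb] at h
    rcases h with h | h
    · have := hinj _ (by omega) _ (by omega) h
      omega
    · exact h.symm
  have hnb0 : ∀ z, H.Adj (x 0) z ↔ z = x j' ∨ z = x 1 := by
    intro z; rw [hxi, hnb, hx1]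
  have hsurj := hcl {w | ∃ a < j' + 1, x a = w} ⟨x 0, 0, by omega, rfl⟩ (by
    rintro _ ⟨a, ha, rfl⟩ y hy
    rcases a with _ | a
    · rcases (hnb0 y).1 hy with h | h
      · exact ⟨j', by omega, h.symm⟩
      · exact ⟨1, by omega, h.symm⟩
    · rcases (hnb a y).1 hy with h | h
      · exact ⟨a, by omega, h.symm⟩
      · rcases (show a + 2 < j' + 1 ∨ a + 1 = j' by omega) with h' | h'
        · exact ⟨a + 2, h', h.symm⟩
        · subst h'
          exact ⟨0, by omega, by rw [h, hxi]⟩)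
  have hbij : Function.Bijective (fun a : Fin (j' + 1) => x a) := by
    constructor
    · intro a b h
      exact Fin.ext (hinj _ a.2 _ b.2 h)
    · intro w
      have : w ∈ {w | ∃ a < j' + 1, x a = w} := by rw [hsurj]; trivial
      obtain ⟨a, ha, h⟩ := this
      exact ⟨⟨a, ha⟩, h⟩
  have hjn : j' + 1 = n := by
    rw [← hcard, ← Fintype.card_of_bijective hbij, Fintype.card_fin]
  subst hjn
  refine ⟨(⟨Equiv.ofBijective _ hbij, ?_⟩ : cycleGraph (j' + 1) ≃g H).symm⟩
  rintro ⟨a, ha⟩ ⟨b, hb⟩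
  rw [cyc_adj hn]
  simp only [Equiv.ofBijective_apply]
  have hI : ∀ a < j' + 1, ∀ b < j' + 1, (x a = x b ↔ a = b) := fun a ha b hb =>
    ⟨hinj a ha b hb, fun h => by rw [h]⟩
  unfold cadj
  rcases a with _ | a
  · rw [hnb0, hI b hb j' (by omega), hI b hb 1 (by omega)]
    omega
  · rw [hnb, hI b hb a (by omega)]
    rcases (show a + 2 < j' + 1 ∨ a + 1 = j' by omega) with h' | h'
    · rw [hI b hb _ h']
      omega
    · subst h'
      rw [← hxi, hI b hb 0 (by omega)]
      omega

lemma deck_iso {W : Type*} [Fintype W] {n : ℕ} (H : SimpleGraph W) (hn : 6 ≤ n)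
    (h : SameDeck H (cycleGraph n) (n / 2)) : Nonempty (H ≃g cycleGraph n) :=
  iso_of_two H (by simpa using deck_card h (by omega) (by simp; omega)) (by omega)
    (deck_two H (by omega) (by omega) (by omega) h)
    (deck_closed H (by omega) (by omega) (by omega) (by omega) h)

end S7

/-- For `n ≥ 6`: (a) every graph with the same `⌊n/2⌋`-deck as `C_n` is
isomorphic to `C_n`; (b) some graph not isomorphic to `C_n` has the same `(⌊n/2⌋-1)`-deck
as `C_n`; hence `ρ(C_n) = ⌊n/2⌋`. -/
theorem stmt_7 (n : ℕ) (hn : 6 ≤ n) :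
    (∀ (W : Type) [Fintype W] (H : SimpleGraph W),
      SameDeck H (cycleGraph n) (n / 2) → Nonempty (H ≃g cycleGraph n)) ∧
    (∃ (W : Type) (_ : Fintype W) (H : SimpleGraph W),
      ¬ Nonempty (H ≃g cycleGraph n) ∧ SameDeck H (cycleGraph n) (n / 2 - 1)) ∧
    IsLeast {k : ℕ | ∀ (W : Type) [Fintype W] (H : SimpleGraph W),
      SameDeck H (cycleGraph n) k → Nonempty (H ≃g cycleGraph n)} (n / 2) := by

  refine ⟨fun W _ H h => S7.deck_iso H hn h,
    ⟨Fin n, inferInstance, S7.tg n (n / 2) ⟨by omega, by omega⟩,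
      S7.tg_not_iso n (n / 2) (by omega) (by omega),
      S7.tg_deck n (n / 2) _ (by omega) (by omega) (by omega)⟩,
    fun W _ H h => S7.deck_iso H hn h, ?_⟩
  intro k hk
  by_contra hlt
  exact S7.tg_not_iso n (n / 2) (by omega) (by omega)
    (hk (Fin n) _ (S7.tg_deck n (n / 2) k (by omega) (by omega) (by omega)))
end

section
/- Let L be a linear forest with k vertices, and let P_n be the path with vertices w_1, …, w_n in path order. For a vertex w_h, let s'(h) denote the number of k-element vertex subsets S of P_n with w_h ∈ S such that the subgraph of P_n induced by S is isomorphic to L and w_h has no neighbor in S (i.e., w_h is an isolated vertex of the induced subgraph). Then for all h and h' with k ≤ h ≤ n−k+1 and k ≤ h' ≤ n−k+1, we have s'(h) = s'(h'). -/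
open SimpleGraph

def NAdj (x y : ℕ) : Prop := x + 1 = y ∨ y + 1 = x

def InvP (Q : Finset ℕ → Prop) : Prop :=
  ∀ (S : Finset ℕ) (f : ℕ → ℕ), (∀ x ∈ S, ∀ y ∈ S, f x = f y → x = y) →
    (∀ x ∈ S, ∀ y ∈ S, (NAdj (f x) (f y) ↔ NAdj x y)) → (Q (S.image f) ↔ Q S)

/-- add a path on `b` vertices as a separate component -/
def addB (b : ℕ) (S : Finset ℕ) : Finset ℕ := Finset.range b ∪ S.image (fun x => x + (b + 1))

def Qb (Q : Finset ℕ → Prop) (b : ℕ) : Finset ℕ → Prop := fun S => Q (addB b S)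

lemma mem_addB (b : ℕ) (S : Finset ℕ) (x : ℕ) :
    x ∈ addB b S ↔ x < b ∨ (b + 1 ≤ x ∧ x - (b + 1) ∈ S) := by
  simp only [addB, Finset.mem_union, Finset.mem_range, Finset.mem_image]
  constructor
  · rintro (h | ⟨y, hy, rfl⟩)
    · exact Or.inl h
    · right; exact ⟨by omega, by simpa using hy⟩
  · rintro (h | ⟨h, h'⟩)
    · exact Or.inl h
    · right; exact ⟨_, h', by omega⟩

lemma InvP.qb {Q : Finset ℕ → Prop} (hQ : InvP Q) (b : ℕ) : InvP (Qb Q b) := by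
  intro S f hf ha
  have key := hQ (addB b S) (fun x => if x < b then x else f (x - (b + 1)) + (b + 1)) ?_ ?_
  · unfold Qb
    rw [← key]
    have : addB b (S.image f) =
        (addB b S).image (fun x => if x < b then x else f (x - (b + 1)) + (b + 1)) := by
      ext z
      simp only [mem_addB, Finset.mem_image]
      constructor
      · rintro (h | ⟨h, y, hy, hyz⟩)
        · exact ⟨z, Or.inl h, by simp [h]⟩
        · refine ⟨y + (b + 1), Or.inr ⟨by omega, by simpa using hy⟩, ?_⟩
          rw [if_neg (by omega)]
          simp only [Nat.add_sub_cancel]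
          omega
      · rintro ⟨y, h, hyz⟩
        rcases h with h | ⟨h, h'⟩
        · rw [if_pos h] at hyz; left; omega
        · rw [if_neg (by omega)] at hyz
          right; exact ⟨by omega, _, h', by omega⟩
    rw [this]
  · intro x hx y hy hxy
    rw [mem_addB] at hx hy
    try simp only at hxy
    rcases hx with hx | ⟨hx, hx'⟩ <;> rcases hy with hy | ⟨hy, hy'⟩
    · rwa [if_pos hx, if_pos hy] at hxy
    · rw [if_pos hx, if_neg (by omega)] at hxy; omega
    · rw [if_neg (by omega), if_pos hy] at hxy; omega
    · rw [if_neg (by omega), if_neg (by omega)] at hxy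
      have := hf _ hx' _ hy' (by omega)
      omega
  · intro x hx y hy
    rw [mem_addB] at hx hy
    try simp only
    rcases hx with hx | ⟨hx, hx'⟩ <;> rcases hy with hy | ⟨hy, hy'⟩
    · rw [if_pos hx, if_pos hy]
    · rw [if_pos hx, if_neg (by omega)]; unfold NAdj; omega
    · rw [if_neg (by omega), if_pos hy]; unfold NAdj; omega
    · rw [if_neg (by omega), if_neg (by omega)]
      have := ha _ hx' _ hy'
      unfold NAdj at this ⊢
      omega

/-- `[a, a+b)` is a maximal block of `S`. -/
def Blk (S : Finset ℕ) (a b : ℕ) : Prop :=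
  a - 1 ∉ S ∧ a + b ∉ S ∧ ∀ x, a ≤ x → x < a + b → x ∈ S

open Classical in
noncomputable def FF (M : ℕ) (Q : Finset ℕ → Prop) (k p : ℕ) : Finset (Finset ℕ) :=
  (Finset.Ioo 0 M).powerset.filter (fun S => S.card = k ∧ Q S ∧ p ∉ S)

open Classical in
noncomputable def GG (M : ℕ) (Q : Finset ℕ → Prop) (k p : ℕ) : Finset (Finset ℕ) :=
  (Finset.Ioo 0 M).powerset.filter (fun S => S.card = k ∧ Q S ∧ p ∈ S)

open Classical in
noncomputable def BB (M : ℕ) (Q : Finset ℕ → Prop) (k a b : ℕ) : Finset (Finset ℕ) :=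
  (Finset.Ioo 0 M).powerset.filter (fun S => S.card = k ∧ Q S ∧ Blk S a b)

open Classical in
noncomputable def AA (M : ℕ) (Q : Finset ℕ → Prop) (k : ℕ) : Finset (Finset ℕ) :=
  (Finset.Ioo 0 M).powerset.filter (fun S => S.card = k ∧ Q S)

lemma FG (M : ℕ) (Q : Finset ℕ → Prop) (k p : ℕ) :
    (GG M Q k p).card + (FF M Q k p).card = (AA M Q k).card := by
  classical
  rw [← Finset.card_filter_add_card_filter_not (s := AA M Q k) (fun S => p ∈ S)]
  congr 2 <;> ext S <;> simp only [GG, FF, AA, Finset.mem_filter] <;> tauto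

/-- expand the missing vertex `a-1` into a block -/
def expd (a b : ℕ) (S : Finset ℕ) : Finset ℕ :=
  Finset.Ico a (a + b) ∪ S.image (fun x => if x < a then x else x + (b + 1))

lemma mem_expd (a b : ℕ) (ha : 1 ≤ a) (S : Finset ℕ) (hS : a - 1 ∉ S) (x : ℕ) :
    x ∈ expd a b S ↔ (a ≤ x ∧ x < a + b) ∨ (x + 1 < a ∧ x ∈ S) ∨
      (a + b < x ∧ x - (b + 1) ∈ S) := by
  have hne : ∀ y ∈ S, y ≠ a - 1 := fun y hy h => hS (h ▸ hy)
  simp only [expd, Finset.mem_union, Finset.mem_Ico, Finset.mem_image]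
  constructor
  · rintro (h | ⟨y, hy, h⟩)
    · exact Or.inl h
    · have := hne y hy
      split_ifs at h with hya
      · subst h; right; left; exact ⟨by omega, hy⟩
      · subst h; right; right; exact ⟨by omega, by simpa using hy⟩
  · rintro (h | ⟨h, h'⟩ | ⟨h, h'⟩)
    · exact Or.inl h
    · right; exact ⟨x, h', by rw [if_pos (by omega)]⟩
    · right; exact ⟨_, h', by rw [if_neg (by omega)]; omega⟩

lemma card_expd (a b : ℕ) (ha : 1 ≤ a) (S : Finset ℕ) (hS : a - 1 ∉ S) :
    (expd a b S).card = S.card + b := by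
  have hne : ∀ y ∈ S, y ≠ a - 1 := fun y hy h => hS (h ▸ hy)
  unfold expd
  rw [Finset.card_union_of_disjoint, Finset.card_image_of_injOn]
  · simp; omega
  · intro x hx y hy h
    simp only at h
    split_ifs at h <;> omega
  · rw [Finset.disjoint_left]
    intro x hx h
    simp only [Finset.mem_Ico, Finset.mem_image] at hx h
    obtain ⟨y, hy, h⟩ := h
    have := hne y hy
    split_ifs at h <;> omega

lemma q_expd {Q : Finset ℕ → Prop} (hQ : InvP Q) (a b : ℕ) (ha : 1 ≤ a) (S : Finset ℕ)
    (hS : a - 1 ∉ S) : Qb Q b S ↔ Q (expd a b S) := by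
  have hne : ∀ y ∈ S, y ≠ a - 1 := fun y hy h => hS (h ▸ hy)
  have hmem : ∀ x ∈ expd a b S, x ≠ a - 1 ∧ x ≠ a + b := by
    intro x hx
    rw [mem_expd a b ha S hS] at hx
    omega
  rw [← hQ (expd a b S) (fun x => if x < a then x + (b + 1) else if x < a + b then x - a else x)]
  · unfold Qb
    have : addB b S = (expd a b S).image
        (fun x => if x < a then x + (b + 1) else if x < a + b then x - a else x) := by
      ext z
      rw [mem_addB, Finset.mem_image]
      constructor
      · rintro (h | ⟨h, h'⟩)
        · refine ⟨z + a, ?_, ?_⟩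
          · rw [mem_expd a b ha S hS]; left; omega
          · rw [if_neg (by omega), if_pos (by omega)]; omega
        · have := hne _ h'
          by_cases hz : z - (b + 1) < a
          · refine ⟨z - (b + 1), ?_, ?_⟩
            · rw [mem_expd a b ha S hS]; right; left; exact ⟨by omega, h'⟩
            · rw [if_pos hz]; omega
          · refine ⟨z, ?_, ?_⟩
            · rw [mem_expd a b ha S hS]; right; right; exact ⟨by omega, h'⟩
            · rw [if_neg (by omega), if_neg (by omega)]
      · rintro ⟨x, hx, h⟩
        rw [mem_expd a b ha S hS] at hx
        rcases hx with hx | ⟨hx, hx'⟩ | ⟨hx, hx'⟩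
        · rw [if_neg (by omega), if_pos (by omega)] at h; left; omega
        · rw [if_pos (by omega)] at h; right
          subst h
          exact ⟨by omega, by simpa using hx'⟩
        · rw [if_neg (by omega), if_neg (by omega)] at h; right
          subst h
          exact ⟨by omega, hx'⟩
    rw [this]
  · intro x hx y hy h
    have h1 := hmem x hx
    have h2 := hmem y hy
    try simp only at h
    split_ifs at h <;> omega
  · intro x hx y hy
    have h1 := hmem x hx
    have h2 := hmem y hy
    simp only [NAdj]
    split_ifs <;> omega

lemma BF {Q : Finset ℕ → Prop} (hQ : InvP Q) (M k a b : ℕ) (ha : 1 ≤ a) (hb : b ≤ k)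
    (hM : a + b ≤ M) : (BB M Q k a b).card = (FF (M - b - 1) (Qb Q b) (k - b) (a - 1)).card := by
  classical
  symm
  refine Finset.card_bij (fun S _ => expd a b S) ?_ ?_ ?_
  · intro S hS
    simp only [FF, Finset.mem_filter, Finset.mem_powerset] at hS
    obtain ⟨hsub, hc, hq, hp⟩ := hS
    simp only [BB, Finset.mem_filter, Finset.mem_powerset]
    refine ⟨?_, ?_, (q_expd hQ a b ha S hp).1 hq, ?_, ?_, ?_⟩
    · intro x hx
      rw [mem_expd a b ha S hp] at hx
      rw [Finset.mem_Ioo]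
      rcases hx with hx | ⟨hx, hx'⟩ | ⟨hx, hx'⟩
      · omega
      · have := Finset.mem_Ioo.1 (hsub hx'); omega
      · have := Finset.mem_Ioo.1 (hsub hx'); omega
    · rw [card_expd a b ha S hp]; omega
    · rw [mem_expd a b ha S hp]; omega
    · rw [mem_expd a b ha S hp]; omega
    · intro x h1 h2; rw [mem_expd a b ha S hp]; omega
  · intro S hS T hT h
    simp only [FF, Finset.mem_filter, Finset.mem_powerset] at hS hT
    have hSp := hS.2.2.2
    have hTp := hT.2.2.2
    have h' : ∀ x, x ∈ expd a b S ↔ x ∈ expd a b T := fun x => by simp only [h]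
    simp only [mem_expd a b ha S hSp, mem_expd a b ha T hTp] at h'
    ext x
    rcases lt_trichotomy (x + 1) a with hx | hx | hx
    · have := h' x
      constructor
      · intro hh; rcases this.1 (Or.inr (Or.inl ⟨hx, hh⟩)) with h1 | h1 | h1
        · omega
        · exact h1.2
        · omega
      · intro hh; rcases this.2 (Or.inr (Or.inl ⟨hx, hh⟩)) with h1 | h1 | h1
        · omega
        · exact h1.2
        · omega
    · have : x = a - 1 := by omega
      subst this
      exact ⟨fun h => absurd h hSp, fun h => absurd h hTp⟩
    · have := h' (x + (b + 1))
      simp only [Nat.add_sub_cancel] at this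
      constructor
      · intro hh; rcases this.1 (Or.inr (Or.inr ⟨by omega, hh⟩)) with h1 | h1 | h1
        · omega
        · omega
        · exact h1.2
      · intro hh; rcases this.2 (Or.inr (Or.inr ⟨by omega, hh⟩)) with h1 | h1 | h1
        · omega
        · omega
        · exact h1.2
  · intro T hT
    simp only [BB, Finset.mem_filter, Finset.mem_powerset] at hT
    obtain ⟨hsub, hc, hq, h1, h2, h3⟩ := hT
    let S : Finset ℕ := (Finset.Ioo 0 (M - b - 1)).filter
      (fun x => (x + 1 < a ∧ x ∈ T) ∨ (a ≤ x ∧ x + (b + 1) ∈ T))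
    have hp : a - 1 ∉ S := by
      simp only [S, Finset.mem_filter]
      omega
    have hE : expd a b S = T := by
      ext x
      rw [mem_expd a b ha S hp]
      simp only [S, Finset.mem_filter, Finset.mem_Ioo]
      constructor
      · rintro (h | ⟨h, h'⟩ | ⟨h, h'⟩)
        · exact h3 x h.1 h.2
        · rcases h'.2 with h | h
          · exact h.2
          · omega
        · rcases h'.2 with h | h
          · omega
          · have e : x - (b + 1) + (b + 1) = x := by omega
            rw [e] at h; exact h.2
      · intro hx
        have hxM := Finset.mem_Ioo.1 (hsub hx)
        have hx1 : x ≠ a - 1 := fun h => h1 (h ▸ hx)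
        have hx2 : x ≠ a + b := fun h => h2 (h ▸ hx)
        by_cases c1 : x < a
        · right; left; exact ⟨by omega, by omega, Or.inl ⟨by omega, hx⟩⟩
        · by_cases c2 : x < a + b
          · left; omega
          · right; right
            have e : x - (b + 1) + (b + 1) = x := by omega
            refine ⟨by omega, by omega, Or.inr ⟨by omega, by rw [e]; exact hx⟩⟩
    refine ⟨S, ?_, hE⟩
    simp only [FF, Finset.mem_filter, Finset.mem_powerset]
    refine ⟨Finset.filter_subset _ _, ?_, ?_, hp⟩
    · have := card_expd a b ha S hp
      rw [hE] at this; omega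
    · rw [q_expd hQ a b ha S hp, hE]; exact hq

lemma exists_blk (S : Finset ℕ) (h0 : 0 ∉ S) (p : ℕ) (hp : p ∈ S) :
    ∃ j b, j < b ∧ j < p ∧ Blk S (p - j) b := by
  classical
  have hp0 : 0 < p := Nat.pos_of_ne_zero (fun h => h0 (h ▸ hp))
  have e1 : ∃ e, p + e ∉ S := by
    obtain ⟨m, hm⟩ := S.exists_nat_subset_range
    exact ⟨m, fun h => by have := Finset.mem_range.1 (hm h); omega⟩
  have e2 : ∃ j, p - j - 1 ∉ S := ⟨p, by simpa using h0⟩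
  have he := Nat.find_spec e1
  have hj := Nat.find_spec e2
  have he' := fun m => Nat.find_min e1 (m := m)
  have hj' := fun m => Nat.find_min e2 (m := m)
  generalize Nat.find e1 = e at *
  generalize Nat.find e2 = j at *
  simp only [not_not] at he' hj'
  have hpos : e ≠ 0 := by rintro rfl; exact he hp
  have hjp : j < p := by
    by_contra hc
    have := hj' (p - 1) (by omega)
    rw [show p - (p - 1) - 1 = 0 by omega] at this
    exact h0 this
  refine ⟨j, j + e, by omega, hjp, hj, ?_, ?_⟩
  · rw [show p - j + (j + e) = p + e by omega]; exact he
  · intro x h1 h2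
    by_cases c : p ≤ x
    · have := he' (x - p) (by omega)
      rwa [show p + (x - p) = x by omega] at this
    · have := hj' (p - x - 1) (by omega)
      rwa [show p - (p - x - 1) - 1 = x by omega] at this

lemma Blk.card_le {S : Finset ℕ} {a b : ℕ} (h : Blk S a b) : b ≤ S.card := by
  have : Finset.Ico a (a + b) ⊆ S := fun x hx => by
    rw [Finset.mem_Ico] at hx; exact h.2.2 x hx.1 hx.2
  have := Finset.card_le_card this
  simpa using this

lemma Blk.unique {S : Finset ℕ} {p a b a' b' : ℕ} (h : Blk S a b) (h' : Blk S a' b')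
    (h1 : a ≤ p) (h2 : p < a + b) (h1' : a' ≤ p) (h2' : p < a' + b') (ha : 1 ≤ a) (ha' : 1 ≤ a') :
    a = a' ∧ b = b' := by
  have e : a = a' := by
    rcases lt_trichotomy a a' with c | c | c
    · exact absurd (h.2.2 (a' - 1) (by omega) (by omega)) h'.1
    · exact c
    · exact absurd (h'.2.2 (a - 1) (by omega) (by omega)) h.1
  subst e
  refine ⟨rfl, ?_⟩
  rcases lt_trichotomy b b' with c | c | c
  · exact absurd (h'.2.2 (a + b) (by omega) (by omega)) h.2.1
  · exact c
  · exact absurd (h.2.2 (a + b') (by omega) (by omega)) h'.2.1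

lemma GB (M : ℕ) (Q : Finset ℕ → Prop) (k p : ℕ) (hkp : k ≤ p) :
    (GG M Q k p).card =
      ∑ x ∈ (Finset.range (k + 1) ×ˢ Finset.range (k + 1)).filter (fun x => x.1 < x.2),
        (BB M Q k (p - x.1) x.2).card := by
  classical
  rw [← Finset.card_biUnion]
  · congr 1
    ext S
    simp only [GG, BB, Finset.mem_filter, Finset.mem_biUnion, Finset.mem_product,
      Finset.mem_range, Finset.mem_powerset, Prod.exists]
    constructor
    · rintro ⟨hs, hc, hq, hp⟩
      obtain ⟨j, b, h1, h2, h3⟩ := exists_blk S (fun h => by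
        have := Finset.mem_Ioo.1 (hs h); omega) p hp
      have := h3.card_le
      exact ⟨j, b, ⟨⟨by omega, by omega⟩, h1⟩, hs, hc, hq, h3⟩
    · rintro ⟨j, b, ⟨h1, h2⟩, hs, hc, hq, h3⟩
      exact ⟨hs, hc, hq, h3.2.2 p (by omega) (by omega)⟩
  · rintro ⟨j, b⟩ hx ⟨j', b'⟩ hx' hne
    simp only [Finset.coe_filter, Finset.mem_product, Finset.mem_range, Set.mem_ofPred_eq] at hx hx'
    rw [Function.onFun, Finset.disjoint_left]
    intro S hS hS'
    simp only [BB, Finset.mem_filter] at hS hS'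
    apply hne
    have := hS.2.2.2.unique (p := p) hS'.2.2.2 (by omega) (by omega) (by omega) (by omega)
      (by omega) (by omega)
    rw [Prod.mk.injEq]
    omega

lemma main_F (k : ℕ) : ∀ (M : ℕ) (Q : Finset ℕ → Prop), InvP Q → ∀ p p' : ℕ, k ≤ p → p + k ≤ M →
    k ≤ p' → p' + k ≤ M → (FF M Q k p).card = (FF M Q k p').card := by
  induction k using Nat.strong_induction_on with
  | _ k ih =>
    intro M Q hQ p p' h1 h2 h3 h4
    have e1 := FG M Q k p
    have e2 := FG M Q k p'
    have : (GG M Q k p).card = (GG M Q k p').card := by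
      rw [GB M Q k p h1, GB M Q k p' h3]
      refine Finset.sum_congr rfl ?_
      rintro ⟨j, b⟩ hx
      simp only [Finset.mem_filter, Finset.mem_product, Finset.mem_range] at hx
      simp only
      rw [BF hQ M k (p - j) b (by omega) (by omega) (by omega),
        BF hQ M k (p' - j) b (by omega) (by omega) (by omega)]
      exact ih (k - b) (by omega) _ _ (hQ.qb b) _ _ (by omega) (by omega) (by omega) (by omega)
    omega

def natPath : SimpleGraph ℕ where
  Adj x y := NAdj x y
  symm := ⟨fun x y h => by unfold NAdj at *; omega⟩
  loopless := ⟨fun x h => by unfold NAdj at *; omega⟩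

def Q0 {k : ℕ} (L : SimpleGraph (Fin k)) (S : Finset ℕ) : Prop :=
  Nonempty ((natPath.induce (↑S : Set ℕ)) ≃g L)

lemma inv_Q0 {k : ℕ} (L : SimpleGraph (Fin k)) : InvP (Q0 L) := by
  intro S f hf ha
  have hb : Function.Bijective (fun x : (↑S : Set ℕ) =>
      (⟨f x.1, by simpa using ⟨x.1, x.2, rfl⟩⟩ : (↑(S.image f) : Set ℕ))) := by
    constructor
    · rintro ⟨x, hx⟩ ⟨y, hy⟩ h
      simp only [Subtype.mk.injEq] at h
      exact Subtype.ext (hf x hx y hy h)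
    · rintro ⟨y, hy⟩
      obtain ⟨x, hx, rfl⟩ := Finset.mem_image.1 (Finset.mem_coe.1 hy)
      exact ⟨⟨x, hx⟩, rfl⟩
  let φ : natPath.induce (↑S : Set ℕ) ≃g natPath.induce (↑(S.image f) : Set ℕ) :=
    { toEquiv := Equiv.ofBijective _ hb
      map_rel_iff' := by
        rintro ⟨x, hx⟩ ⟨y, hy⟩
        exact ha x hx y hy }
  exact ⟨fun ⟨g⟩ => ⟨φ.trans g⟩, fun ⟨g⟩ => ⟨φ.symm.trans g⟩⟩

lemma q0_fin {k n : ℕ} (L : SimpleGraph (Fin k)) (s : Finset (Fin n)) :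
    Q0 L (s.image (fun x : Fin n => x.val + 1)) ↔
      Nonempty (((pathGraph n).induce (↑s : Set (Fin n))) ≃g L) := by
  have hb : Function.Bijective (fun x : (↑s : Set (Fin n)) =>
      (⟨x.1.val + 1, Finset.mem_coe.2 (Finset.mem_image_of_mem _ (Finset.mem_coe.1 x.2))⟩ :
        (↑(s.image (fun x : Fin n => x.val + 1)) : Set ℕ))) := by
    constructor
    · rintro ⟨x, hx⟩ ⟨y, hy⟩ h
      have h' := congrArg Subtype.val h
      simp only at h'
      exact Subtype.ext (Fin.ext (by show x.val = y.val; omega))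
    · rintro ⟨y, hy⟩
      obtain ⟨x, hx, rfl⟩ := Finset.mem_image.1 (Finset.mem_coe.1 hy)
      exact ⟨⟨x, hx⟩, rfl⟩
  let φ : (pathGraph n).induce (↑s : Set (Fin n)) ≃g
      natPath.induce (↑(s.image (fun x : Fin n => x.val + 1)) : Set ℕ) :=
    { toEquiv := Equiv.ofBijective _ hb
      map_rel_iff' := by
        rintro ⟨x, hx⟩ ⟨y, hy⟩
        simp only [SimpleGraph.comap_adj, Equiv.ofBijective_apply, Function.Embedding.subtype_apply,
          pathGraph_adj, natPath, NAdj]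
        omega }
  exact ⟨fun ⟨g⟩ => ⟨φ.trans g⟩, fun ⟨g⟩ => ⟨φ.symm.trans g⟩⟩

lemma bridge (k n : ℕ) (L : SimpleGraph (Fin k)) (h : ℕ) (hh1 : 1 ≤ h) (hlt : h - 1 < n) :
    Set.ncard {s : Finset (Fin n) | s.card = k ∧ (⟨h - 1, hlt⟩ : Fin n) ∈ s ∧
      (∀ u ∈ s, ¬ (pathGraph n).Adj ⟨h - 1, hlt⟩ u) ∧
      Nonempty (((pathGraph n).induce (↑s : Set (Fin n))) ≃g L)} =
    (BB (n + 1) (Q0 L) k h 1).card := by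
  classical
  have hinj : Function.Injective (fun x : Fin n => x.val + 1) := fun x y h => Fin.ext (by
    simp only at h; omega)
  rw [← Set.ncard_coe_finset, ← Set.ncard_image_of_injective _ (Finset.image_injective hinj)]
  congr 1
  ext T
  simp only [Set.mem_image, Set.mem_ofPred_eq, BB, Finset.coe_filter, Finset.mem_powerset]
  constructor
  · rintro ⟨s, ⟨h1, h2, h3, h4⟩, rfl⟩
    refine ⟨?_, ?_, (q0_fin L s).2 h4, ?_, ?_, ?_⟩
    · intro x hx
      obtain ⟨y, hy, rfl⟩ := Finset.mem_image.1 hx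
      rw [Finset.mem_Ioo]; omega
    · rw [Finset.card_image_of_injective _ hinj, h1]
    · intro hx
      obtain ⟨y, hy, e⟩ := Finset.mem_image.1 hx
      refine h3 y hy ?_
      rw [pathGraph_adj]; simp only; omega
    · intro hx
      obtain ⟨y, hy, e⟩ := Finset.mem_image.1 hx
      refine h3 y hy ?_
      rw [pathGraph_adj]; simp only; omega
    · intro x hx hx'
      exact Finset.mem_image.2 ⟨_, h2, by simp only; omega⟩
  · rintro ⟨hs, hc, hq, b1, b2, b3⟩
    have hT : (Finset.univ.filter (fun x : Fin n => x.val + 1 ∈ T)).image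
        (fun x : Fin n => x.val + 1) = T := by
      ext x
      simp only [Finset.mem_image, Finset.mem_filter, Finset.mem_univ, true_and]
      constructor
      · rintro ⟨y, hy, rfl⟩; exact hy
      · intro hx
        have := Finset.mem_Ioo.1 (hs hx)
        have e : x - 1 + 1 = x := by omega
        exact ⟨⟨x - 1, by omega⟩, by simp only [e]; exact hx, by simp only [e]⟩
    refine ⟨_, ⟨?_, ?_, ?_, ?_⟩, hT⟩
    · rw [← hT, Finset.card_image_of_injective _ hinj] at hc; exact hc
    · simp only [Finset.mem_filter, Finset.mem_univ, true_and]
      exact b3 _ (by omega) (by omega)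
    · intro u hu hadj
      simp only [Finset.mem_filter, Finset.mem_univ, true_and] at hu
      rw [pathGraph_adj] at hadj
      simp only at hadj
      rcases hadj with e | e
      · exact b2 (by rwa [show h + 1 = u.val + 1 by omega])
      · exact b1 (by rwa [show h - 1 = u.val + 1 by omega])
    · rw [← q0_fin, hT]; exact hq

/-- For a linear forest `L` with `k` vertices and the path `P_n` with
vertices `w_1, …, w_n` in order (here `w_h` is the vertex of `Fin n` with index `h-1`),
the number `s'(h)` of `k`-element vertex subsets `S` containing `w_h`, inducing a
subgraph isomorphic to `L`, and in which `w_h` has no neighbor, is the same for all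
`h` with `k ≤ h ≤ n - k + 1`. -/
theorem stmt_9 (k n : ℕ) (L : SimpleGraph (Fin k)) (hL : IsLinearForest L)
    (h h' : ℕ) (hh1 : 1 ≤ h) (hhn : h ≤ n) (hh'1 : 1 ≤ h') (hh'n : h' ≤ n)
    (hkh : k ≤ h) (hhk : h ≤ n - k + 1) (hkh' : k ≤ h') (hh'k : h' ≤ n - k + 1) :
    Set.ncard {s : Finset (Fin n) | s.card = k ∧ (⟨h - 1, by omega⟩ : Fin n) ∈ s ∧
      (∀ u ∈ s, ¬ (pathGraph n).Adj ⟨h - 1, by omega⟩ u) ∧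
      Nonempty (((pathGraph n).induce (↑s : Set (Fin n))) ≃g L)} =
    Set.ncard {s : Finset (Fin n) | s.card = k ∧ (⟨h' - 1, by omega⟩ : Fin n) ∈ s ∧
      (∀ u ∈ s, ¬ (pathGraph n).Adj ⟨h' - 1, by omega⟩ u) ∧
      Nonempty (((pathGraph n).induce (↑s : Set (Fin n))) ≃g L)} := by
  rw [bridge k n L h hh1 (by omega), bridge k n L h' hh'1 (by omega)]
  rcases Nat.eq_zero_or_pos k with hk | hk
  · have hz : ∀ a, (BB (n + 1) (Q0 L) k a 1).card = 0 := by
      intro a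
      rw [Finset.card_eq_zero, Finset.eq_empty_iff_forall_notMem]
      intro S hS
      simp only [BB, Finset.mem_filter] at hS
      have := hS.2.2.2.card_le
      omega
    rw [hz, hz]
  · rw [BF (inv_Q0 L) (n + 1) k h 1 hh1 hk (by omega),
      BF (inv_Q0 L) (n + 1) k h' 1 hh'1 hk (by omega)]
    exact main_F (k - 1) _ _ ((inv_Q0 L).qb 1) _ _ (by omega) (by omega) (by omega) (by omega)
end
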